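/- arXiv:2108.10214 — 3 statements merged into one kernel-verified Lean document; each statement's English description precedes it below -/
import Mathlib

section
/- With the notation of the iterated integrals Ω at φ = π/4, one has Ω_{2,1} = −iπ·log 2, i.e. ∫₀¹ F₁(t₂)·(∫₀^{t₂} F₂(t₁) dt₁) dt₂ = −iπ·log 2. -/
noncomputable section

/-- `p₁ = e^{iπ/4}` -/
def p₁ : ℂ := Complex.exp (Complex.I * ((Real.pi : ℂ) / 4))
/-- `p₂ = -e^{-iπ/4}` -/
def p₂ : ℂ := -Complex.exp (-(Complex.I * ((Real.pi : ℂ) / 4)))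
/-- `p₃ = -p₁` -/
def p₃ : ℂ := -p₁
/-- `p₄ = -p₂` -/
def p₄ : ℂ := -p₂

def F₁ (z : ℂ) : ℂ := 1 / (z - p₁) - 1 / (z - p₂) + 1 / (z - p₃) - 1 / (z - p₄)

def F₂ (z : ℂ) : ℂ := 1 / (z - p₁) - 1 / (z - p₂) - 1 / (z - p₃) + 1 / (z - p₄)

def F₃ (z : ℂ) : ℂ := 1 / (z - p₁) + 1 / (z - p₂) - 1 / (z - p₃) - 1 / (z - p₄)

/-- Iterated integral along `[0, z]`:
`Omega [F_{i₁}, …, F_{iₙ}] z = Ω_{i₁,…,iₙ}(z)`, defined recursively by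
`Ω_{i₁,…,i_k}(z) = ∫₀ᶻ Ω_{i₁,…,i_{k-1}}(t) · F_{i_k}(t) dt`, with `Ω_∅ ≡ 1`. -/
def Omega (fs : List (ℂ → ℂ)) : ℝ → ℂ :=
  fs.foldl (fun g f => fun z => ∫ t in (0:ℝ)..z, g t * f (t : ℂ)) (fun _ => 1)

/-!
For an angle `φ ∈ (0, π)` let `q φ t = t ^ 2 - 2 t cos φ + 1`, the quadratic with roots `e^{±iφ}`.
On the real line the second form is the logarithmic derivative of `q φ t / q φ (-t)`, so that
`Ω₂(t) = log (q φ t) - log (q φ (-t))`. This vanishes at `φ = π / 2`, hence it is the integral of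
its derivative in the angle, `4 t sin θ (t ^ 2 + 1) / (q θ t * q θ (-t))`, over `θ` from `π / 2` to
`φ`. After multiplying by the first form and exchanging the two integrations, the integral over `t`
is elementary by partial fractions and equals `2 π i cos φ / (sin φ + sin θ)`. A primitive in `θ` is
`2 π i (log sin ((θ + φ) / 2) - log cos ((θ - φ) / 2))`, whence `Ω₂₁ = 2 π i log sin φ`.
-/

open Real Set MeasureTheory

/-- The real quadratic with roots `e^{iθ}` and `e^{-iθ}`. -/
def unitQuadratic (θ t : ℝ) : ℝ := t ^ 2 - 2 * t * cos θ + 1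

/-- The even quartic with roots `±e^{iθ}` and `±e^{-iθ}`; for `θ = π / 4` it is `t ^ 4 + 1`. -/
def unitQuartic (θ t : ℝ) : ℝ := unitQuadratic θ t * unitQuadratic θ (-t)

/-- The form `F₁` with the angle `π / 4` replaced by `φ`. -/
def angleForm₁ (φ : ℝ) (z : ℂ) : ℂ :=
  1 / (z - Complex.exp (Complex.I * φ)) - 1 / (z + Complex.exp (-(Complex.I * φ))) +
    1 / (z + Complex.exp (Complex.I * φ)) - 1 / (z - Complex.exp (-(Complex.I * φ)))

/-- The form `F₂` with the angle `π / 4` replaced by `φ`. -/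
def angleForm₂ (φ : ℝ) (z : ℂ) : ℂ :=
  1 / (z - Complex.exp (Complex.I * φ)) - 1 / (z + Complex.exp (-(Complex.I * φ))) -
    1 / (z + Complex.exp (Complex.I * φ)) + 1 / (z - Complex.exp (-(Complex.I * φ)))

@[fun_prop]
lemma continuous_unitQuadratic {X : Type*} [TopologicalSpace X] {θ t : X → ℝ}
    (hθ : Continuous θ) (ht : Continuous t) : Continuous fun x ↦ unitQuadratic (θ x) (t x) := by
  unfold unitQuadratic
  fun_prop

@[fun_prop]
lemma continuous_unitQuartic {X : Type*} [TopologicalSpace X] {θ t : X → ℝ}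
    (hθ : Continuous θ) (ht : Continuous t) : Continuous fun x ↦ unitQuartic (θ x) (t x) := by
  unfold unitQuartic
  fun_prop

lemma unitQuadratic_eq_sq_add_sq (θ t : ℝ) :
    unitQuadratic θ t = (t - cos θ) ^ 2 + sin θ ^ 2 := by
  rw [unitQuadratic, sin_sq]
  ring

lemma unitQuadratic_add_unitQuadratic_neg (θ t : ℝ) :
    unitQuadratic θ t + unitQuadratic θ (-t) = 2 * (t ^ 2 + 1) := by
  simp only [unitQuadratic]
  ring

lemma unitQuartic_eq_sq_add_sq (θ t : ℝ) :
    unitQuartic θ t = (1 - t ^ 2) ^ 2 + (2 * t * sin θ) ^ 2 := by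
  rw [mul_pow, sin_sq, unitQuartic, unitQuadratic, unitQuadratic]
  ring

lemma hasDerivAt_unitQuadratic (θ t : ℝ) :
    HasDerivAt (unitQuadratic θ) (2 * t - 2 * cos θ) t := by
  have h := (((hasDerivAt_id t).pow 2).sub
    (((hasDerivAt_id t).const_mul 2).mul_const (cos θ))).add_const 1
  exact h.congr_deriv (by simp)

lemma hasDerivAt_unitQuadratic_angle (θ t : ℝ) :
    HasDerivAt (fun θ ↦ unitQuadratic θ t) (2 * t * sin θ) θ := by
  have h := (((hasDerivAt_cos θ).const_mul (2 * t)).const_sub (t ^ 2)).add_const 1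
  exact h.congr_deriv (by ring)

lemma arctan_add_arctan_of_mul_eq_one {x y : ℝ} (hx : 0 < x) (hxy : x * y = 1) :
    arctan x + arctan y = π / 2 := by
  rw [eq_inv_of_mul_eq_one_right hxy, arctan_inv_of_pos hx]
  ring

lemma sub_exp_mul_sub_exp_neg (θ t : ℝ) :
    ((t : ℂ) - Complex.exp (Complex.I * θ)) * (t - Complex.exp (-(Complex.I * θ))) =
      unitQuadratic θ t := by
  have hprod : Complex.exp (Complex.I * θ) * Complex.exp (-(Complex.I * θ)) = 1 := by
    rw [← Complex.exp_add, add_neg_cancel, Complex.exp_zero]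
  have hsum := Complex.two_cos (θ : ℂ)
  rw [neg_mul, mul_comm (θ : ℂ)] at hsum
  push_cast [unitQuadratic]
  linear_combination hprod + t * hsum

section Angle

variable {θ : ℝ}

lemma unitQuadratic_pos (hθ : sin θ ≠ 0) (t : ℝ) : 0 < unitQuadratic θ t := by
  rw [unitQuadratic_eq_sq_add_sq]
  positivity

lemma unitQuartic_pos (hθ : sin θ ≠ 0) (t : ℝ) : 0 < unitQuartic θ t :=
  mul_pos (unitQuadratic_pos hθ t) (unitQuadratic_pos hθ (-t))

lemma one_div_sub_exp_sub_one_div_sub_exp_neg (hθ : sin θ ≠ 0) (t : ℝ) :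
    1 / ((t : ℂ) - Complex.exp (Complex.I * θ)) - 1 / (t - Complex.exp (-(Complex.I * θ))) =
      Complex.I * (2 * sin θ / unitQuadratic θ t : ℝ) := by
  have hfactor := sub_exp_mul_sub_exp_neg θ t
  have hne : (unitQuadratic θ t : ℂ) ≠ 0 := mod_cast (unitQuadratic_pos hθ t).ne'
  rw [← hfactor] at hne
  have hsin := Complex.two_sin (θ : ℂ)
  rw [neg_mul, mul_comm (θ : ℂ)] at hsin
  rw [div_sub_div _ _ (left_ne_zero_of_mul hne) (right_ne_zero_of_mul hne), hfactor]
  push_cast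
  rw [hsin, mul_div_assoc']
  congr 1
  linear_combination
    (Complex.exp (-(Complex.I * θ)) - Complex.exp (Complex.I * θ)) * -Complex.I_sq

lemma one_div_sub_exp_add_one_div_sub_exp_neg (hθ : sin θ ≠ 0) (t : ℝ) :
    1 / ((t : ℂ) - Complex.exp (Complex.I * θ)) + 1 / (t - Complex.exp (-(Complex.I * θ))) =
      ((2 * t - 2 * cos θ) / unitQuadratic θ t : ℝ) := by
  have hfactor := sub_exp_mul_sub_exp_neg θ t
  have hne : (unitQuadratic θ t : ℂ) ≠ 0 := mod_cast (unitQuadratic_pos hθ t).ne'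
  rw [← hfactor] at hne
  have hcos := Complex.two_cos (θ : ℂ)
  rw [neg_mul, mul_comm (θ : ℂ)] at hcos
  rw [div_add_div _ _ (left_ne_zero_of_mul hne) (right_ne_zero_of_mul hne), hfactor]
  push_cast
  rw [hcos]
  congr 1
  ring

lemma angleForm₁_ofReal (hθ : sin θ ≠ 0) (t : ℝ) :
    angleForm₁ θ t = Complex.I * (8 * t * sin θ * cos θ / unitQuartic θ t : ℝ) := by
  have hpair (t : ℝ) := one_div_sub_exp_sub_one_div_sub_exp_neg hθ t
  have hsplit : 8 * t * sin θ * cos θ / unitQuartic θ t =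
      2 * sin θ / unitQuadratic θ t - 2 * sin θ / unitQuadratic θ (-t) := by
    rw [div_sub_div _ _ (unitQuadratic_pos hθ t).ne' (unitQuadratic_pos hθ (-t)).ne', unitQuartic]
    congr 1
    simp only [unitQuadratic]
    ring
  rw [hsplit, Complex.ofReal_sub, mul_sub, ← hpair, ← hpair, angleForm₁, Complex.ofReal_neg,
    ← neg_add', ← neg_add', one_div_neg_eq_neg_one_div, one_div_neg_eq_neg_one_div]
  ring

lemma angleForm₂_ofReal (hθ : sin θ ≠ 0) (t : ℝ) :
    angleForm₂ θ t = ((2 * t - 2 * cos θ) / unitQuadratic θ t +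
      (2 * -t - 2 * cos θ) / unitQuadratic θ (-t) : ℝ) := by
  have hpair (t : ℝ) := one_div_sub_exp_add_one_div_sub_exp_neg hθ t
  rw [Complex.ofReal_add, ← hpair, ← hpair, angleForm₂, Complex.ofReal_neg,
    ← neg_add', ← neg_add', one_div_neg_eq_neg_one_div, one_div_neg_eq_neg_one_div]
  ring

lemma integral_angleForm₂ (hθ : sin θ ≠ 0) (x : ℝ) :
    ∫ t in (0 : ℝ)..x, angleForm₂ θ t =
      (log (unitQuadratic θ x) - log (unitQuadratic θ (-x)) : ℝ) := by
  have hpos := unitQuadratic_pos hθ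
  simp only [angleForm₂_ofReal hθ]
  rw [intervalIntegral.integral_ofReal, intervalIntegral.integral_eq_sub_of_hasDerivAt
    (f := fun t ↦ log (unitQuadratic θ t) - log (unitQuadratic θ (-t)))]
  · simp
  · intro t _
    have hneg := (hasDerivAt_unitQuadratic θ (-t)).comp t (hasDerivAt_neg t)
    exact (((hasDerivAt_unitQuadratic θ t).log (hpos t).ne').sub
      (hneg.log (hpos (-t)).ne')).congr_deriv (by simp only [Function.comp_apply]; ring)
  · refine Continuous.intervalIntegrable (.add ?_ ?_) _ _ <;>
      exact .div (by fun_prop) (by fun_prop) fun t ↦ (hpos _).ne'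

lemma hasDerivAt_arctan_sub_cos_div_sin (hθ : sin θ ≠ 0) (t : ℝ) :
    HasDerivAt (fun t ↦ arctan ((t - cos θ) / sin θ)) (sin θ / unitQuadratic θ t) t := by
  have h := (((hasDerivAt_id t).sub_const (cos θ)).div_const (sin θ)).arctan
  refine h.congr_deriv ?_
  have hq := (unitQuadratic_pos hθ t).ne'
  rw [unitQuadratic_eq_sq_add_sq] at hq ⊢
  simp only [id_eq]
  field_simp
  ring

lemma intervalIntegrable_sq_add_one_div_unitQuartic (hθ : sin θ ≠ 0) (a b : ℝ) :
    IntervalIntegrable (fun t ↦ (t ^ 2 + 1) / unitQuartic θ t) volume a b :=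
  Continuous.intervalIntegrable
    (.div (by fun_prop) (by fun_prop) fun t ↦ (unitQuartic_pos hθ t).ne') _ _

lemma integral_sq_add_one_div_unitQuartic (hθ : 0 < sin θ) :
    ∫ t in (0 : ℝ)..1, (t ^ 2 + 1) / unitQuartic θ t = π / (4 * sin θ) := by
  have hcos : cos θ < 1 := by nlinarith [sin_sq_add_cos_sq θ]
  have hsum : arctan ((1 - cos θ) / sin θ) + arctan ((1 + cos θ) / sin θ) = π / 2 := by
    refine arctan_add_arctan_of_mul_eq_one (div_pos (by linarith) hθ) ?_
    field_simp
    linear_combination -sin_sq_add_cos_sq θ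
  rw [intervalIntegral.integral_eq_sub_of_hasDerivAt
    (f := fun t ↦ (arctan ((t - cos θ) / sin θ) - arctan ((-t - cos θ) / sin θ)) / (2 * sin θ))
    ?_ (intervalIntegrable_sq_add_one_div_unitQuartic hθ.ne' 0 1)]
  · rw [neg_zero, sub_self, zero_div, sub_zero, ← neg_add', neg_div, arctan_neg, sub_neg_eq_add,
      hsum]
    field_simp
    norm_num
  · intro t _
    have hderiv := hasDerivAt_arctan_sub_cos_div_sin hθ.ne'
    have hneg := (hderiv (-t)).comp t (hasDerivAt_neg t)
    refine (((hderiv t).sub hneg).div_const (2 * sin θ)).congr_deriv ?_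
    have hq := (unitQuadratic_pos hθ.ne' t).ne'
    have hq' := (unitQuadratic_pos hθ.ne' (-t)).ne'
    rw [unitQuartic]
    field_simp
    linear_combination unitQuadratic_add_unitQuadratic_neg θ t

end Angle

lemma integral_sq_mul_div_unitQuartic_mul_unitQuartic {φ θ : ℝ} (hφ : 0 < sin φ)
    (hθ : 0 < sin θ) (hne : sin θ ≠ sin φ) :
    ∫ t in (0 : ℝ)..1, t ^ 2 * (t ^ 2 + 1) / (unitQuartic φ t * unitQuartic θ t) =
      π / (16 * sin φ * sin θ * (sin φ + sin θ)) := by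
  have hdiff : sin θ - sin φ ≠ 0 := sub_ne_zero.2 hne
  have hsum : sin φ + sin θ ≠ 0 := (add_pos hφ hθ).ne'
  have hpartial (t : ℝ) : t ^ 2 * (t ^ 2 + 1) / (unitQuartic φ t * unitQuartic θ t) =
      ((t ^ 2 + 1) / unitQuartic φ t - (t ^ 2 + 1) / unitQuartic θ t) /
        (4 * (sin θ - sin φ) * (sin φ + sin θ)) := by
    have hQφ := (unitQuartic_pos hφ.ne' t).ne'
    have hQθ := (unitQuartic_pos hθ.ne' t).ne'
    field_simp
    rw [unitQuartic_eq_sq_add_sq, unitQuartic_eq_sq_add_sq]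
    ring
  simp only [hpartial]
  rw [intervalIntegral.integral_div, intervalIntegral.integral_sub
    (intervalIntegrable_sq_add_one_div_unitQuartic hφ.ne' 0 1)
    (intervalIntegrable_sq_add_one_div_unitQuartic hθ.ne' 0 1),
    integral_sq_add_one_div_unitQuartic hφ, integral_sq_add_one_div_unitQuartic hθ]
  field_simp
  norm_num

section BaseAngle

variable {φ : ℝ}

lemma uIcc_pi_div_two_subset_Ioo (hφ : φ ∈ Ioo 0 π) : uIcc (π / 2) φ ⊆ Ioo 0 π :=
  ordConnected_Ioo.uIcc_subset ⟨by positivity, by linarith [pi_pos]⟩ hφ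

lemma log_unitQuadratic_sub_log_unitQuadratic_neg (hφ : φ ∈ Ioo 0 π) (t : ℝ) :
    log (unitQuadratic φ t) - log (unitQuadratic φ (-t)) =
      ∫ θ in (π / 2)..φ, 4 * t * sin θ * (t ^ 2 + 1) / unitQuartic θ t := by
  have hsin : ∀ θ ∈ uIcc (π / 2) φ, sin θ ≠ 0 := fun θ hθ ↦
    (sin_pos_of_mem_Ioo (uIcc_pi_div_two_subset_Ioo hφ hθ)).ne'
  rw [intervalIntegral.integral_eq_sub_of_hasDerivAt
    (f := fun θ ↦ log (unitQuadratic θ t) - log (unitQuadratic θ (-t)))]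
  · simp [unitQuadratic]
  · intro θ hθ
    have hq := (unitQuadratic_pos (hsin θ hθ) t).ne'
    have hq' := (unitQuadratic_pos (hsin θ hθ) (-t)).ne'
    refine (((hasDerivAt_unitQuadratic_angle θ t).log hq).sub
      ((hasDerivAt_unitQuadratic_angle θ (-t)).log hq')).congr_deriv ?_
    rw [unitQuartic]
    field_simp
    linear_combination 2 * t * sin θ * unitQuadratic_add_unitQuadratic_neg θ t
  · exact ContinuousOn.intervalIntegrable
      (.div (by fun_prop) (by fun_prop) fun θ hθ ↦ (unitQuartic_pos (hsin θ hθ) t).ne')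

lemma sin_ne_sin_of_mem_uIoo_pi_div_two (hφ : φ ∈ Ioo 0 π) {θ : ℝ} (hθ : θ ∈ uIoo (π / 2) φ) :
    sin θ ≠ sin φ := by
  intro heq
  have hθπ := uIcc_pi_div_two_subset_Ioo hφ (uIoo_subset_uIcc_self hθ)
  have hcos : cos θ ^ 2 = cos φ ^ 2 := by rw [cos_sq', cos_sq', heq]
  have hθφ : θ = φ ∨ θ = π - φ := by
    refine (sq_eq_sq_iff_eq_or_eq_neg.1 hcos).imp (fun h ↦ ?_) fun h ↦ ?_
    · exact injOn_cos (Ioo_subset_Icc_self hθπ) (Ioo_subset_Icc_self hφ) h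
    · rw [← cos_pi_sub] at h
      exact injOn_cos (Ioo_subset_Icc_self hθπ)
        ⟨by linarith [hφ.2], by linarith [hφ.1]⟩ h
  rcases le_total (π / 2) φ with hle | hle
  · rw [uIoo_of_le hle] at hθ
    rcases hθφ with rfl | rfl <;> linarith [hθ.1, hθ.2]
  · rw [uIoo_of_ge hle] at hθ
    rcases hθφ with rfl | rfl <;> linarith [hθ.1, hθ.2]

lemma integral_cos_div_sin_add_sin (hφ : φ ∈ Ioo 0 π) :
    ∫ θ in (π / 2)..φ, cos φ / (sin φ + sin θ) = log (sin φ) := by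
  have hsub := uIcc_pi_div_two_subset_Ioo hφ
  rw [intervalIntegral.integral_eq_sub_of_hasDerivAt
    (f := fun θ ↦ log (sin ((θ + φ) / 2)) - log (cos ((θ - φ) / 2)))]
  · have hcompl : cos ((π / 2 - φ) / 2) = sin ((π / 2 + φ) / 2) := by
      rw [← cos_pi_div_two_sub]
      ring_nf
    simp [hcompl]
  · intro θ hθ
    obtain ⟨hθ0, hθπ⟩ := hsub hθ
    have hs : sin ((θ + φ) / 2) ≠ 0 :=
      (sin_pos_of_pos_of_lt_pi (by linarith [hφ.1]) (by linarith [hφ.2])).ne'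
    have hc : cos ((θ - φ) / 2) ≠ 0 :=
      (cos_pos_of_mem_Ioo ⟨by linarith [hφ.2], by linarith [hφ.1]⟩).ne'
    have hds := (((hasDerivAt_id θ).add_const φ).div_const 2).sin
    have hdc := (((hasDerivAt_id θ).sub_const φ).div_const 2).cos
    refine ((hds.log hs).sub (hdc.log hc)).congr_deriv ?_
    have hcosφ : cos φ = cos ((θ + φ) / 2) * cos ((θ - φ) / 2) +
        sin ((θ + φ) / 2) * sin ((θ - φ) / 2) := by
      rw [← cos_sub]
      ring_nf
    rw [add_comm (sin φ), sin_add_sin, hcosφ]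
    simp only [id_eq]
    field_simp
    ring
  · refine ContinuousOn.intervalIntegrable (.div (by fun_prop) (by fun_prop) fun θ hθ ↦ ?_)
    exact (add_pos (sin_pos_of_mem_Ioo hφ) (sin_pos_of_mem_Ioo (hsub hθ))).ne'

/-- The integrand of `Ω₂₁ / i` as a double integral over `t ∈ [0, 1]` and `θ` between `π / 2`
and `φ`: the `θ`-derivative of `Ω₂` times the first form. -/
def angleKernel (φ t θ : ℝ) : ℝ :=
  4 * t * sin θ * (t ^ 2 + 1) / unitQuartic θ t * (8 * t * sin φ * cos φ / unitQuartic φ t)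

lemma integral_angleForm₂_mul_angleForm₁ (hφ : φ ∈ Ioo 0 π) (t : ℝ) :
    (∫ s in (0 : ℝ)..t, angleForm₂ φ s) * angleForm₁ φ t =
      Complex.I * (∫ θ in (π / 2)..φ, angleKernel φ t θ : ℝ) := by
  have hsin := (sin_pos_of_mem_Ioo hφ).ne'
  simp only [angleKernel]
  rw [integral_angleForm₂ hsin, angleForm₁_ofReal hsin, intervalIntegral.integral_mul_const,
    ← log_unitQuadratic_sub_log_unitQuadratic_neg hφ]
  push_cast
  ring

lemma integral_angleKernel {θ : ℝ} (hφ : 0 < sin φ) (hθ : 0 < sin θ) (hne : sin θ ≠ sin φ) :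
    ∫ t in (0 : ℝ)..1, angleKernel φ t θ = 2 * π * (cos φ / (sin φ + sin θ)) := by
  have hkernel (t : ℝ) : angleKernel φ t θ = 32 * sin θ * sin φ * cos φ *
      (t ^ 2 * (t ^ 2 + 1) / (unitQuartic φ t * unitQuartic θ t)) := by
    rw [angleKernel]
    ring
  simp only [hkernel]
  rw [intervalIntegral.integral_const_mul,
    integral_sq_mul_div_unitQuartic_mul_unitQuartic hφ hθ hne]
  field_simp
  ring

lemma integral_integral_angleKernel_swap (hφ : φ ∈ Ioo 0 π) :
    ∫ t in (0 : ℝ)..1, ∫ θ in (π / 2)..φ, angleKernel φ t θ =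
      ∫ θ in (π / 2)..φ, ∫ t in (0 : ℝ)..1, angleKernel φ t θ := by
  have hcont : ContinuousOn (Function.uncurry (angleKernel φ))
      (uIcc 0 1 ×ˢ uIcc (π / 2) φ) := by
    unfold Function.uncurry angleKernel
    refine .mul (.div (by fun_prop) (by fun_prop) ?_) (.div (by fun_prop) (by fun_prop) ?_)
    · rintro ⟨t, θ⟩ ⟨-, hθ⟩
      exact (unitQuartic_pos (sin_pos_of_mem_Ioo (uIcc_pi_div_two_subset_Ioo hφ hθ)).ne' t).ne'
    · rintro ⟨t, θ⟩ -
      exact (unitQuartic_pos (sin_pos_of_mem_Ioo hφ).ne' t).ne'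
  exact intervalIntegral_intervalIntegral_swap <|
    (hcont.integrableOn_compact (isCompact_uIcc.prod isCompact_uIcc)).mono_set
      (prod_mono uIoc_subset_uIcc uIoc_subset_uIcc)

end BaseAngle

theorem stmt_10_general {φ : ℝ} (hφ : φ ∈ Ioo 0 π) :
    Omega [angleForm₂ φ, angleForm₁ φ] 1 = 2 * π * Complex.I * (log (sin φ) : ℝ) := by
  have hinner : EqOn (fun θ ↦ ∫ t in (0 : ℝ)..1, angleKernel φ t θ)
      (fun θ ↦ 2 * π * (cos φ / (sin φ + sin θ))) (uIoo (π / 2) φ) := fun θ hθ ↦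
    integral_angleKernel (sin_pos_of_mem_Ioo hφ)
      (sin_pos_of_mem_Ioo (uIcc_pi_div_two_subset_Ioo hφ (uIoo_subset_uIcc_self hθ)))
      (sin_ne_sin_of_mem_uIoo_pi_div_two hφ hθ)
  calc Omega [angleForm₂ φ, angleForm₁ φ] 1
      = ∫ t in (0 : ℝ)..1, (∫ s in (0 : ℝ)..t, angleForm₂ φ s) * angleForm₁ φ t := by
        simp only [Omega, List.foldl_cons, List.foldl_nil, one_mul]
    _ = Complex.I * (∫ t in (0 : ℝ)..1, ∫ θ in (π / 2)..φ, angleKernel φ t θ : ℝ) := by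
        simp only [integral_angleForm₂_mul_angleForm₁ hφ]
        rw [intervalIntegral.integral_const_mul, intervalIntegral.integral_ofReal]
    _ = Complex.I * (2 * π * log (sin φ) : ℝ) := by
        rw [integral_integral_angleKernel_swap hφ, intervalIntegral.integral_congr_uIoo hinner,
          intervalIntegral.integral_const_mul, integral_cos_div_sin_add_sin hφ]
    _ = 2 * π * Complex.I * (log (sin φ) : ℝ) := by
        push_cast
        ring

lemma F₁_eq_angleForm₁ : F₁ = angleForm₁ (π / 4) := by
  ext z
  simp [F₁, angleForm₁, p₁, p₂, p₃, p₄]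

lemma F₂_eq_angleForm₂ : F₂ = angleForm₂ (π / 4) := by
  ext z
  simp [F₂, angleForm₂, p₁, p₂, p₃, p₄]

lemma log_sin_pi_div_four : log (sin (π / 4)) = -(log 2 / 2) := by
  rw [sin_pi_div_four, log_div (by positivity) two_ne_zero, log_sqrt zero_le_two]
  ring

/- STATEMENT 10: `Ω_{2,1} = -iπ log 2`. -/
theorem stmt_10 :
    Omega [F₂, F₁] 1 = -Complex.I * (Real.pi : ℂ) * ((Real.log 2 : ℝ) : ℂ) := by
  rw [F₁_eq_angleForm₁, F₂_eq_angleForm₂,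
    stmt_10_general ⟨by positivity, by linarith [pi_pos]⟩, log_sin_pi_div_four]
  push_cast
  ring
end
end

section
/- With the notation of the iterated integrals Ω at φ = π/4, one has Ω_{2,2,3} = iπ³/12. -/
noncomputable section

/-!
For poles `p, -p̄, -p, p̄` with `p` in the upper half plane, put
`L t = log |(t - p) / (t + p)|²` and `θ t = arg ((t - p) / (t + p))` up to a constant. On the real
line `F₂ = L'` and `F₃ = 2iθ'`, so that `Ω_{2,2,3} = i ∫ L² dθ`. The two functions are linked by
`sinh (-L / 2) = (re p / im p) sin θ`, and `θ` runs from `0` to `π / 2` on `[0, |p|]`; hence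
`Ω_{2,2,3} = 4i ∫₀^{π/2} arsinh² (a sin x) dx` with `a = re p / im p`.

The partial sums of the power series of `arsinh²` lie alternately below and above it on the whole
line, and Wallis' integrals turn them into the partial sums of
`(π / 4) ∑ (-1)ⁿ a^(2n+2) / (n+1)² = -(π / 4) Li₂(-a²)`. For `p = e^{iπ/4}` one has `a = 1`, and
`∑ (-1)ⁿ / (n+1)² = π² / 12`.
-/

open Filter Finset Topology

section AlternatingSums

theorem tendsto_sum_range_of_alternating_enclosure {f : ℕ → ℝ} {S : ℝ}
    (hf : Tendsto f atTop (𝓝 0))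
    (hS : ∀ N, 0 ≤ (-1) ^ N * (S - ∑ n ∈ range N, f n)) :
    Tendsto (fun N ↦ ∑ n ∈ range N, f n) atTop (𝓝 S) := by
  refine tendsto_iff_dist_tendsto_zero.2 <|
    squeeze_zero (fun _ ↦ dist_nonneg) (fun N ↦ ?_) (by simpa using hf.abs)
  have hN := hS N
  have hN' := hS (N + 1)
  rw [sum_range_succ, pow_succ] at hN'
  rw [dist_comm, Real.dist_eq]
  rcases neg_one_pow_eq_or ℝ N with h | h <;> rw [h] at hN hN'
  · rw [abs_of_nonneg (by linarith)]
    exact le_trans (by linarith) (le_abs_self _)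
  · rw [abs_of_nonpos (by linarith)]
    exact le_trans (by linarith) (neg_le_abs _)

theorem hasSum_neg_one_pow_div_nat_pow {k : ℕ} (hk : k ≠ 0) :
    HasSum (fun n : ℕ ↦ (-1 : ℝ) ^ n / (n : ℝ) ^ (2 * k))
      ((-1) ^ (k + 1) * (2 * Real.pi) ^ (2 * k) / 2 / (2 * k).factorial *
        ((2 / 2 ^ (2 * k) - 1) * bernoulli (2 * k))) := by
  have hcos (n : ℕ) : Real.cos (2 * Real.pi * n * 2⁻¹) = (-1) ^ n := by
    rw [← Real.cos_nat_mul_pi]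
    ring_nf
  have h := hasSum_one_div_nat_pow_mul_cos hk (x := 2⁻¹) (by norm_num)
  simpa only [hcos, ← bernoulliFun_eval_half, bernoulliFun, one_div_mul_eq_div] using h

theorem hasSum_neg_one_pow_div_succ_sq :
    HasSum (fun n : ℕ ↦ (-1 : ℝ) ^ n / (n + 1) ^ 2) (Real.pi ^ 2 / 12) := by
  have h := ((hasSum_nat_add_iff' 1).2 (hasSum_neg_one_pow_div_nat_pow one_ne_zero)).neg
  convert! h using 1
  · ext n
    push_cast
    ring
  · norm_num [bernoulli_two, Nat.factorial]
    ring

end AlternatingSums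

section ArsinhSq

/-- The coefficient `(2n)!! / (2n+1)!!` of `(-1)ⁿ x^(2n+1)` in the power series of
`arsinh x / √(1 + x²)`, written as in Mathlib's Wallis integrals. -/
def wallisCoeff (n : ℕ) : ℝ := ∏ i ∈ range n, (2 * (i : ℝ) + 2) / (2 * i + 3)

/-- The `N`-th partial sum of the power series of `arsinh x / √(1 + x²)` at `0`. -/
def arsinhDivSqrtPartialSum (N : ℕ) (x : ℝ) : ℝ :=
  ∑ n ∈ range N, (-1) ^ n * wallisCoeff n * x ^ (2 * n + 1)

/-- The `N`-th partial sum of the power series of `arsinh² x` at `0`. -/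
def arsinhSqPartialSum (N : ℕ) (x : ℝ) : ℝ :=
  ∑ n ∈ range N, (-1) ^ n * (wallisCoeff n / (n + 1)) * x ^ (2 * n + 2)

theorem wallisCoeff_pos (n : ℕ) : 0 < wallisCoeff n :=
  prod_pos fun _ _ ↦ by positivity

theorem wallisCoeff_succ (n : ℕ) :
    wallisCoeff (n + 1) = wallisCoeff n * ((2 * n + 2) / (2 * n + 3)) :=
  prod_range_succ _ _

theorem hasDerivAt_sqrt_one_add_sq (x : ℝ) :
    HasDerivAt (fun y : ℝ ↦ √(1 + y ^ 2)) (x / √(1 + x ^ 2)) x := by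
  refine (((hasDerivAt_pow 2 x).const_add 1).sqrt (by positivity)).congr_deriv ?_
  field_simp
  simp [mul_comm]

theorem hasDerivAt_arsinhSqPartialSum (N : ℕ) (x : ℝ) :
    HasDerivAt (arsinhSqPartialSum N) (2 * arsinhDivSqrtPartialSum N x) x := by
  unfold arsinhSqPartialSum arsinhDivSqrtPartialSum
  rw [mul_sum]
  refine HasDerivAt.fun_sum fun n _ ↦ ?_
  refine ((hasDerivAt_pow (2 * n + 2) x).const_mul
    ((-1) ^ n * (wallisCoeff n / (n + 1)))).congr_deriv ?_
  push_cast
  field_simp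

-- For the full series `u = arsinh x / √(1 + x²)` the derivative is `1 / √(1 + x²)`; truncation
-- leaves exactly one monomial, whose sign is what makes the enclosure alternate.
theorem hasDerivAt_sqrt_mul_arsinhDivSqrtPartialSum (N : ℕ) (x : ℝ) :
    HasDerivAt (fun y ↦ √(1 + y ^ 2) * arsinhDivSqrtPartialSum N y)
      ((1 - (-1) ^ N * ((2 * N + 1) * wallisCoeff N) * x ^ (2 * N)) / √(1 + x ^ 2)) x := by
  induction N with
  | zero => simpa [arsinhDivSqrtPartialSum, wallisCoeff] using hasDerivAt_const x (0 : ℝ)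
  | succ N ih =>
    have hterm := (hasDerivAt_sqrt_one_add_sq x).mul
      ((hasDerivAt_pow (2 * N + 1) x).const_mul ((-1) ^ N * wallisCoeff N))
    convert! ih.add hterm using 1
    · ext y
      simp [arsinhDivSqrtPartialSum, sum_range_succ, mul_add]
    · have hsq : √(1 + x ^ 2) ^ 2 = 1 + x ^ 2 := Real.sq_sqrt (by positivity)
      rw [wallisCoeff_succ]
      push_cast
      field_simp
      rw [hsq]
      ring

theorem nonneg_of_hasDerivAt_nonneg {g g' : ℝ → ℝ} {a x : ℝ}
    (hg : ∀ y, HasDerivAt g (g' y) y) (hga : 0 ≤ g a) (hg' : ∀ y, a ≤ y → 0 ≤ g' y)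
    (hx : a ≤ x) : 0 ≤ g x := by
  have hmono : MonotoneOn g (Set.Ici a) :=
    monotoneOn_of_hasDerivWithinAt_nonneg (convex_Ici a)
      (fun y _ ↦ (hg y).continuousAt.continuousWithinAt) (fun y _ ↦ (hg y).hasDerivWithinAt)
      fun y hy ↦ hg' y (interior_subset hy)
  exact hga.trans (hmono Set.self_mem_Ici hx hx)

theorem arsinh_alternating_enclosure (N : ℕ) {x : ℝ} (hx : 0 ≤ x) :
    0 ≤ (-1) ^ N * (Real.arsinh x - √(1 + x ^ 2) * arsinhDivSqrtPartialSum N x) := by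
  refine nonneg_of_hasDerivAt_nonneg
    (g := fun y ↦ (-1) ^ N * (Real.arsinh y - √(1 + y ^ 2) * arsinhDivSqrtPartialSum N y))
    (g' := fun y ↦ (2 * N + 1) * wallisCoeff N * y ^ (2 * N) / √(1 + y ^ 2))
    (fun y ↦ ?_) (by simp [arsinhDivSqrtPartialSum]) (fun y hy ↦ ?_) hx
  · refine (((Real.hasDerivAt_arsinh y).sub
      (hasDerivAt_sqrt_mul_arsinhDivSqrtPartialSum N y)).const_mul ((-1) ^ N)).congr_deriv ?_
    have hsign : ((-1 : ℝ) ^ N) * (-1) ^ N = 1 := by rw [← mul_pow]; simp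
    linear_combination
      ((2 * N + 1) * wallisCoeff N * y ^ (2 * N) / √(1 + y ^ 2)) * hsign
  · have := wallisCoeff_pos N
    positivity

theorem arsinh_sq_alternating_enclosure_of_nonneg (N : ℕ) {x : ℝ} (hx : 0 ≤ x) :
    0 ≤ (-1) ^ N * (Real.arsinh x ^ 2 - arsinhSqPartialSum N x) := by
  refine nonneg_of_hasDerivAt_nonneg
    (g := fun y ↦ (-1) ^ N * (Real.arsinh y ^ 2 - arsinhSqPartialSum N y))
    (g' := fun y ↦ 2 * ((-1) ^ N *
      (Real.arsinh y - √(1 + y ^ 2) * arsinhDivSqrtPartialSum N y)) / √(1 + y ^ 2))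
    (fun y ↦ ?_) (by simp [arsinhSqPartialSum]) (fun y hy ↦ ?_) hx
  · refine ((((Real.hasDerivAt_arsinh y).pow 2).sub
      (hasDerivAt_arsinhSqPartialSum N y)).const_mul ((-1) ^ N)).congr_deriv ?_
    field_simp
    ring
  · have := arsinh_alternating_enclosure N hy
    positivity

theorem arsinh_sq_alternating_enclosure (N : ℕ) (x : ℝ) :
    0 ≤ (-1) ^ N * (Real.arsinh x ^ 2 - arsinhSqPartialSum N x) := by
  rcases le_total 0 x with hx | hx
  · exact arsinh_sq_alternating_enclosure_of_nonneg N hx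
  · have heven (n : ℕ) : (-x) ^ (2 * n + 2) = x ^ (2 * n + 2) := Even.neg_pow ⟨n + 1, by ring⟩ x
    simpa [arsinhSqPartialSum, Real.arsinh_neg, heven] using
      arsinh_sq_alternating_enclosure_of_nonneg N (neg_nonneg.2 hx)

theorem wallisCoeff_mul_integral_sin_pow (n : ℕ) :
    wallisCoeff n * ∫ x in (0 : ℝ)..Real.pi / 2, Real.sin x ^ (2 * n + 2) =
      Real.pi / 4 / (n + 1) := by
  induction n with
  | zero =>
    simp only [wallisCoeff, range_zero, prod_empty, mul_zero, zero_add, integral_sin_sq,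
      Real.sin_zero, Real.cos_pi_div_two, Nat.cast_zero]
    ring
  | succ n ih =>
    have hrec : ∫ x in (0 : ℝ)..Real.pi / 2, Real.sin x ^ (2 * (n + 1) + 2) =
        (2 * n + 3) / (2 * n + 4) * ∫ x in (0 : ℝ)..Real.pi / 2, Real.sin x ^ (2 * n + 2) := by
      rw [show 2 * (n + 1) + 2 = 2 * n + 2 + 2 by ring, integral_sin_pow]
      simp only [Real.sin_zero, Real.cos_pi_div_two]
      push_cast
      ring
    calc _ = (n + 1) / (n + 2) *
          (wallisCoeff n * ∫ x in (0 : ℝ)..Real.pi / 2, Real.sin x ^ (2 * n + 2)) := by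
          rw [hrec, wallisCoeff_succ]
          field_simp
          ring
      _ = _ := by
          rw [ih]
          push_cast
          field_simp
          ring

theorem continuous_arsinhSqPartialSum (N : ℕ) : Continuous (arsinhSqPartialSum N) := by
  unfold arsinhSqPartialSum
  fun_prop

theorem integral_arsinhSqPartialSum_mul_sin (N : ℕ) (a : ℝ) :
    ∫ x in (0 : ℝ)..Real.pi / 2, arsinhSqPartialSum N (a * Real.sin x) =
      ∑ n ∈ range N, Real.pi / 4 * ((-1) ^ n * a ^ (2 * n + 2) / (n + 1) ^ 2) := by
  unfold arsinhSqPartialSum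
  rw [intervalIntegral.integral_finsetSum fun n _ ↦
    Continuous.intervalIntegrable (by fun_prop) _ _]
  refine sum_congr rfl fun n _ ↦ ?_
  simp only [mul_pow, ← mul_assoc, intervalIntegral.integral_const_mul]
  rw [pow_two ((n : ℝ) + 1), ← div_div]
  linear_combination (-1) ^ n * a ^ (2 * n + 2) / (n + 1) * wallisCoeff_mul_integral_sin_pow n

theorem integral_arsinh_mul_sin_sq_alternating_enclosure (N : ℕ) (a : ℝ) :
    0 ≤ (-1) ^ N * ((∫ x in (0 : ℝ)..Real.pi / 2, Real.arsinh (a * Real.sin x) ^ 2) -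
      ∑ n ∈ range N, Real.pi / 4 * ((-1) ^ n * a ^ (2 * n + 2) / (n + 1) ^ 2)) := by
  have hpoly : Continuous fun x ↦ arsinhSqPartialSum N (a * Real.sin x) :=
    (continuous_arsinhSqPartialSum N).comp (by fun_prop)
  have harsinh : Continuous fun x ↦ Real.arsinh (a * Real.sin x) ^ 2 :=
    (Real.continuous_arsinh.comp (by fun_prop)).pow 2
  rw [← integral_arsinhSqPartialSum_mul_sin, ← intervalIntegral.integral_sub
    (harsinh.intervalIntegrable _ _) (hpoly.intervalIntegrable _ _),
    ← intervalIntegral.integral_const_mul]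
  exact intervalIntegral.integral_nonneg (by positivity) fun x _ ↦
    arsinh_sq_alternating_enclosure N (a * Real.sin x)

theorem hasSum_integral_arsinh_mul_sin_sq {a : ℝ} (ha : |a| ≤ 1) :
    HasSum (fun n : ℕ ↦ Real.pi / 4 * ((-1) ^ n * a ^ (2 * n + 2) / (n + 1) ^ 2))
      (∫ x in (0 : ℝ)..Real.pi / 2, Real.arsinh (a * Real.sin x) ^ 2) := by
  have hsummable : Summable fun n : ℕ ↦
      Real.pi / 4 * ((-1) ^ n * a ^ (2 * n + 2) / ((n : ℝ) + 1) ^ 2) := by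
    refine Summable.mul_left _ (Summable.of_norm_bounded
      hasSum_neg_one_pow_div_succ_sq.summable.norm fun n ↦ ?_)
    simp only [norm_div, norm_mul, Real.norm_eq_abs, abs_pow]
    gcongr
    exact mul_le_of_le_one_right (by positivity) (pow_le_one₀ (abs_nonneg a) ha)
  exact (hsummable.hasSum_iff_tendsto_nat).2 <|
    tendsto_sum_range_of_alternating_enclosure hsummable.tendsto_atTop_zero
      (integral_arsinh_mul_sin_sq_alternating_enclosure · a)

end ArsinhSq

section IteratedIntegral

theorem Omega_concat (fs : List (ℂ → ℂ)) (f : ℂ → ℂ) (z : ℝ) :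
    Omega (fs ++ [f]) z = ∫ t in (0 : ℝ)..z, Omega fs t * f t := by
  simp [Omega, List.foldl_append]

theorem Omega_replicate {f : ℂ → ℂ} {L : ℝ → ℂ} (hL : ∀ t : ℝ, HasDerivAt L (f t) t)
    (hL0 : L 0 = 0) (hf : Continuous fun t : ℝ ↦ f t) (n : ℕ) (z : ℝ) :
    Omega (List.replicate n f) z = L z ^ n / n.factorial := by
  induction n generalizing z with
  | zero => simp [Omega]
  | succ n ih =>
    have hLcont : Continuous L := continuous_iff_continuousAt.2 fun t ↦ (hL t).continuousAt
    have hderiv (t : ℝ) : HasDerivAt (fun s ↦ L s ^ (n + 1) / (n + 1).factorial)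
        (L t ^ n / n.factorial * f t) t := by
      refine (((hL t).pow (n + 1)).div_const ((n + 1).factorial : ℂ)).congr_deriv ?_
      have := n.factorial_ne_zero
      rw [Nat.factorial_succ]
      push_cast
      field_simp
    simp only [List.replicate_succ', Omega_concat, ih]
    rw [intervalIntegral.integral_eq_sub_of_hasDerivAt (fun t _ ↦ hderiv t)
      ((((hLcont.pow n).div_const _).mul hf).intervalIntegrable _ _)]
    simp [hL0]

end IteratedIntegral

section Kernels

open Complex ComplexConjugate

variable {p : ℂ}

/-- The function `F₂` for the poles `p, -p̄, -p, p̄` in place of `p₁, p₂, p₃, p₄`. -/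
def kernelTwo (p z : ℂ) : ℂ :=
  1 / (z - p) - 1 / (z + conj p) - 1 / (z + p) + 1 / (z - conj p)

/-- The function `F₃` for the poles `p, -p̄, -p, p̄` in place of `p₁, p₂, p₃, p₄`. -/
def kernelThree (p z : ℂ) : ℂ :=
  1 / (z - p) + 1 / (z + conj p) - 1 / (z + p) - 1 / (z - conj p)

/-- The function `log |(t - p) / (t + p)|²`, a primitive of `kernelTwo p` on the real line. -/
def logRatio (p : ℂ) (t : ℝ) : ℝ := Real.log (normSq (t - p)) - Real.log (normSq (t + p))

/-- The argument of `(t - p) / (t + p)`, normalized to vanish at `t = 0`; `2i` times it is a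
primitive of `kernelThree p` on the real line. -/
def poleAngle (p : ℂ) (t : ℝ) : ℝ :=
  Real.arctan ((t - p.re) / p.im) + Real.arctan ((t + p.re) / p.im)

/-- The derivative of `poleAngle p`. -/
def poleAngleDeriv (p : ℂ) (t : ℝ) : ℝ := p.im / normSq (t - p) + p.im / normSq (t + p)

theorem normSq_ofReal_sub (p : ℂ) (t : ℝ) : normSq (t - p) = (t - p.re) ^ 2 + p.im ^ 2 := by
  simp only [normSq_apply, sub_re, sub_im, ofReal_re, ofReal_im]
  ring

theorem normSq_ofReal_add (p : ℂ) (t : ℝ) : normSq (t + p) = (t + p.re) ^ 2 + p.im ^ 2 := by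
  simp only [normSq_apply, add_re, add_im, ofReal_re, ofReal_im]
  ring

theorem normSq_ofReal_sub_pos (hp : p.im ≠ 0) (t : ℝ) : 0 < normSq (t - p) := by
  rw [normSq_ofReal_sub]
  positivity

theorem normSq_ofReal_add_pos (hp : p.im ≠ 0) (t : ℝ) : 0 < normSq (t + p) := by
  rw [normSq_ofReal_add]
  positivity

theorem one_div_add_one_div_conj (w : ℂ) :
    1 / w + 1 / conj w = ((2 * w.re / normSq w : ℝ) : ℂ) := by
  rw [one_div, one_div, inv_def, inv_def, conj_conj, normSq_conj, ← add_mul, add_comm, add_conj]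
  push_cast
  ring

theorem one_div_sub_one_div_conj (w : ℂ) :
    1 / w - 1 / conj w = ((-2 * w.im / normSq w : ℝ) : ℂ) * I := by
  rw [one_div, one_div, inv_def, inv_def, conj_conj, normSq_conj, ← sub_mul, ← neg_sub, sub_conj]
  push_cast
  ring

theorem kernelTwo_ofReal (p : ℂ) (t : ℝ) :
    kernelTwo p t =
      ((2 * (t - p.re) / normSq (t - p) - 2 * (t + p.re) / normSq (t + p) : ℝ) : ℂ) := by
  have hsub := one_div_add_one_div_conj (t - p)
  have hadd := one_div_add_one_div_conj (t + p)
  simp only [map_sub, map_add, conj_ofReal, sub_re, add_re, ofReal_re] at hsub hadd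
  rw [ofReal_sub, ← hsub, ← hadd, kernelTwo]
  ring

theorem kernelThree_ofReal (p : ℂ) (t : ℝ) :
    kernelThree p t = 2 * I * (poleAngleDeriv p t : ℂ) := by
  have hsub := one_div_sub_one_div_conj (t - p)
  have hadd := one_div_sub_one_div_conj (t + p)
  simp only [map_sub, map_add, conj_ofReal, sub_im, add_im, ofReal_im] at hsub hadd
  rw [kernelThree, poleAngleDeriv]
  push_cast at hsub hadd ⊢
  linear_combination hsub - hadd

theorem hasDerivAt_log_normSq_sub (hp : p.im ≠ 0) (t : ℝ) :
    HasDerivAt (fun s : ℝ ↦ Real.log (normSq (s - p)))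
      (2 * (t - p.re) / normSq (t - p)) t := by
  have hpos := normSq_ofReal_sub_pos hp t
  simp only [normSq_ofReal_sub] at hpos ⊢
  simpa using ((((hasDerivAt_id t).sub_const p.re).pow 2).add_const (p.im ^ 2)).log hpos.ne'

theorem hasDerivAt_logRatio (hp : p.im ≠ 0) (t : ℝ) :
    HasDerivAt (fun s : ℝ ↦ (logRatio p s : ℂ)) (kernelTwo p t) t := by
  have hneg := hasDerivAt_log_normSq_sub (p := -p) (by simpa using hp) t
  simp only [sub_neg_eq_add, neg_re] at hneg
  rw [kernelTwo_ofReal]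
  exact ((hasDerivAt_log_normSq_sub hp t).sub hneg).ofReal_comp

theorem hasDerivAt_arctan_sub_div (hp : p.im ≠ 0) (t : ℝ) :
    HasDerivAt (fun s ↦ Real.arctan ((s - p.re) / p.im)) (p.im / normSq (t - p)) t := by
  have hpos := normSq_ofReal_sub_pos hp t
  refine ((((hasDerivAt_id t).sub_const p.re).div_const p.im).arctan).congr_deriv ?_
  rw [normSq_ofReal_sub] at hpos ⊢
  simp only [id]
  field_simp
  ring

theorem hasDerivAt_poleAngle (hp : p.im ≠ 0) (t : ℝ) :
    HasDerivAt (poleAngle p) (poleAngleDeriv p t) t := by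
  have hconj := hasDerivAt_arctan_sub_div (p := -conj p) (by simpa using hp) t
  have hnormSq : normSq (t + conj p) = normSq (t + p) := by
    rw [← normSq_conj, map_add, conj_conj, conj_ofReal]
  simp only [sub_neg_eq_add, neg_re, neg_im, conj_re, conj_im, neg_neg, hnormSq] at hconj
  exact (hasDerivAt_arctan_sub_div hp t).add hconj

theorem continuous_poleAngleDeriv (hp : p.im ≠ 0) : Continuous (poleAngleDeriv p) := by
  unfold poleAngleDeriv
  exact (continuous_const.div (by fun_prop) fun t ↦ (normSq_ofReal_sub_pos hp t).ne').add
    (continuous_const.div (by fun_prop) fun t ↦ (normSq_ofReal_add_pos hp t).ne')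

theorem continuous_kernelTwo_ofReal (hp : p.im ≠ 0) : Continuous fun t : ℝ ↦ kernelTwo p t := by
  simp only [kernelTwo_ofReal]
  exact continuous_ofReal.comp <|
    (Continuous.div (by fun_prop) (by fun_prop) fun t ↦ (normSq_ofReal_sub_pos hp t).ne').sub
      (Continuous.div (by fun_prop) (by fun_prop) fun t ↦ (normSq_ofReal_add_pos hp t).ne')

theorem logRatio_zero (p : ℂ) : logRatio p 0 = 0 := by
  simp [logRatio]

theorem poleAngle_zero (p : ℂ) : poleAngle p 0 = 0 := by
  simp [poleAngle, neg_div, Real.arctan_neg]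

theorem poleAngle_norm (hp : 0 < p.im) : poleAngle p ‖p‖ = Real.pi / 2 := by
  have hlt : p.re < ‖p‖ := (le_abs_self _).trans_lt (abs_re_lt_norm.2 hp.ne')
  have hsub : 0 < ‖p‖ - p.re := sub_pos.2 hlt
  have hinv : (‖p‖ + p.re) / p.im = ((‖p‖ - p.re) / p.im)⁻¹ := by
    have hsq : ‖p‖ ^ 2 = p.re ^ 2 + p.im ^ 2 := by
      rw [← normSq_eq_norm_sq, normSq_apply]
      ring
    field_simp
    linear_combination hsq
  rw [poleAngle, hinv, Real.arctan_inv_of_pos (by positivity)]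
  ring

theorem sqrt_one_add_div_sq {s : ℝ} (hs : 0 < s) (x : ℝ) :
    √(1 + (x / s) ^ 2) = √(x ^ 2 + s ^ 2) / s := by
  rw [show 1 + (x / s) ^ 2 = (x ^ 2 + s ^ 2) / s ^ 2 by field_simp; ring,
    Real.sqrt_div' _ (by positivity), Real.sqrt_sq hs.le]

theorem sin_poleAngle (hp : 0 < p.im) (t : ℝ) :
    Real.sin (poleAngle p t) =
      2 * t * p.im / (√(normSq (t - p)) * √(normSq (t + p))) := by
  have hsub := Real.sqrt_pos.2 (normSq_ofReal_sub_pos hp.ne' t)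
  have hadd := Real.sqrt_pos.2 (normSq_ofReal_add_pos hp.ne' t)
  simp only [poleAngle, Real.sin_add, Real.sin_arctan, Real.cos_arctan, sqrt_one_add_div_sq hp,
    ← normSq_ofReal_sub, ← normSq_ofReal_add]
  field_simp
  ring

theorem sinh_neg_logRatio_div_two (hp : p.im ≠ 0) (t : ℝ) :
    Real.sinh (-logRatio p t / 2) =
      2 * t * p.re / (√(normSq (t - p)) * √(normSq (t + p))) := by
  have hsub := normSq_ofReal_sub_pos hp t
  have hadd := normSq_ofReal_add_pos hp t
  have hsub' := Real.sqrt_pos.2 hsub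
  have hadd' := Real.sqrt_pos.2 hadd
  have hlog : -logRatio p t / 2 = Real.log (√(normSq (t + p)) / √(normSq (t - p))) := by
    rw [Real.log_div hadd'.ne' hsub'.ne', Real.log_sqrt hadd.le, Real.log_sqrt hsub.le, logRatio]
    ring
  rw [hlog, Real.sinh_log (by positivity)]
  field_simp
  rw [Real.sq_sqrt hadd.le, Real.sq_sqrt hsub.le, normSq_ofReal_sub, normSq_ofReal_add]
  ring

theorem arsinh_mul_sin_poleAngle (hp : 0 < p.im) (t : ℝ) :
    Real.arsinh (p.re / p.im * Real.sin (poleAngle p t)) = -logRatio p t / 2 := by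
  rw [← Real.arsinh_sinh (-logRatio p t / 2), sinh_neg_logRatio_div_two hp.ne', sin_poleAngle hp]
  congr 1
  field_simp

theorem integral_logRatio_sq_mul_poleAngleDeriv (hp : 0 < p.im) :
    ∫ t in (0 : ℝ)..‖p‖, logRatio p t ^ 2 * poleAngleDeriv p t =
      4 * ∫ x in (0 : ℝ)..Real.pi / 2, Real.arsinh (p.re / p.im * Real.sin x) ^ 2 := by
  have hsubst := intervalIntegral.integral_comp_mul_deriv (a := 0) (b := ‖p‖)
    (g := fun x ↦ Real.arsinh (p.re / p.im * Real.sin x) ^ 2)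
    (fun t _ ↦ hasDerivAt_poleAngle hp.ne' t) (continuous_poleAngleDeriv hp.ne').continuousOn
    ((Real.continuous_arsinh.comp (by fun_prop)).pow 2)
  rw [poleAngle_zero, poleAngle_norm hp] at hsubst
  rw [← hsubst, ← intervalIntegral.integral_const_mul]
  refine intervalIntegral.integral_congr fun t _ ↦ ?_
  simp only [Function.comp_apply, arsinh_mul_sin_poleAngle hp]
  ring

theorem Omega_kernels_eq_integral (hp : 0 < p.im) :
    Omega [kernelTwo p, kernelTwo p, kernelThree p] ‖p‖ =
      4 * I * (∫ x in (0 : ℝ)..Real.pi / 2, Real.arsinh (p.re / p.im * Real.sin x) ^ 2 : ℝ) := by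
  have hOmega (t : ℝ) :
      Omega [kernelTwo p, kernelTwo p] t * kernelThree p t =
        I * ((logRatio p t ^ 2 * poleAngleDeriv p t : ℝ) : ℂ) := by
    have h := Omega_replicate (hasDerivAt_logRatio hp.ne') (by simp [logRatio_zero])
      (continuous_kernelTwo_ofReal hp.ne') 2 t
    rw [show [kernelTwo p, kernelTwo p] = List.replicate 2 (kernelTwo p) from rfl, h,
      kernelThree_ofReal]
    push_cast [Nat.factorial_two]
    ring
  rw [show [kernelTwo p, kernelTwo p, kernelThree p] =
    [kernelTwo p, kernelTwo p] ++ [kernelThree p] from rfl, Omega_concat]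
  simp only [hOmega]
  rw [intervalIntegral.integral_const_mul, intervalIntegral.integral_ofReal,
    integral_logRatio_sq_mul_poleAngleDeriv hp]
  push_cast
  ring

theorem stmt_11_general (hp : 0 < p.im) (hre : |p.re| ≤ p.im) :
    HasSum (fun n : ℕ ↦
        I * Real.pi * (((-1) ^ n * (p.re / p.im) ^ (2 * n + 2) / (n + 1) ^ 2 : ℝ) : ℂ))
      (Omega [kernelTwo p, kernelTwo p, kernelThree p] ‖p‖) := by
  have hratio : |p.re / p.im| ≤ 1 := by
    rwa [abs_div, abs_of_pos hp, div_le_one hp]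
  rw [Omega_kernels_eq_integral hp]
  convert! (hasSum_ofReal.2 (hasSum_integral_arsinh_mul_sin_sq hratio)).mul_left (4 * I) using 2
  push_cast
  ring

theorem Omega_kernels_eq_of_re_eq_im (hp : 0 < p.im) (hre : p.re = p.im) :
    Omega [kernelTwo p, kernelTwo p, kernelThree p] ‖p‖ = I * (Real.pi : ℂ) ^ 3 / 12 := by
  have hgeneral := stmt_11_general hp (by rw [hre, abs_of_pos hp])
  simp only [hre, div_self hp.ne', one_pow, mul_one] at hgeneral
  rw [hgeneral.unique ((hasSum_ofReal.2 hasSum_neg_one_pow_div_succ_sq).mul_left (I * Real.pi))]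
  push_cast
  ring

end Kernels

section EighthRoots

open Complex ComplexConjugate

theorem p₁_re : p₁.re = √2 / 2 := by
  rw [p₁, mul_comm, ← Real.cos_pi_div_four, ← exp_ofReal_mul_I_re]
  push_cast
  rfl

theorem p₁_im : p₁.im = √2 / 2 := by
  rw [p₁, mul_comm, ← Real.sin_pi_div_four, ← exp_ofReal_mul_I_im]
  push_cast
  rfl

theorem norm_p₁ : ‖p₁‖ = 1 := by
  rw [p₁, mul_comm]
  exact_mod_cast norm_exp_ofReal_mul_I (Real.pi / 4)

theorem p₂_eq_neg_conj : p₂ = -conj p₁ := by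
  simp [p₁, p₂, ← exp_conj, conj_ofNat]

theorem F₂_eq_kernelTwo : F₂ = kernelTwo p₁ := by
  ext z
  simp [F₂, kernelTwo, p₃, p₄, p₂_eq_neg_conj]

theorem F₃_eq_kernelThree : F₃ = kernelThree p₁ := by
  ext z
  simp [F₃, kernelThree, p₃, p₄, p₂_eq_neg_conj]

end EighthRoots

/- STATEMENT 11: `Ω_{2,2,3} = iπ³/12`. -/
theorem stmt_11 :
    Omega [F₂, F₂, F₃] 1 = Complex.I * (Real.pi : ℂ) ^ 3 / 12 := by
  have him : 0 < p₁.im := by rw [p₁_im]; positivity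
  have hre : p₁.re = p₁.im := by rw [p₁_re, p₁_im]
  simpa only [F₂_eq_kernelTwo, F₃_eq_kernelThree, norm_p₁] using
    Omega_kernels_eq_of_re_eq_im him hre
end
end

section
/- With the notation of the iterated integrals Ω at φ = π/4, one has Ω_{2,1,1,1} = (iπ³/12)·log 2 − (iπ/6)·(log 2)³ − (iπ/4)·ζ(3). -/
noncomputable section

/-!
In the variable `θ = π/2 - 2 arctan t²` one has `F₁ dt = -i dθ`, so repeated integration by parts
collapses the iterated integral to a multiple of `J = ∫₀^{π/2} θ³ sin(θ/2) / √(2 cos θ) dθ`. This is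
the imaginary part of the integral of `(log w)³ / √(1 + w²)` along the quarter circle from `1` to
`i`. By Cauchy's theorem the quarter circle may be replaced by the two radii; the one along `[0, 1]`
contributes a real number, and the other one, parametrised by `w = i cos θ`, gives
`J = ∫₀^{π/2} Re (log (cos θ) + iπ/2)³ dθ`.

The required moments of `log (2 cos θ)` come from `log (1 + e^{2iθ}) = log (2 cos θ) + iθ`: the mean
value property of `log (1 + z) ^ n` expresses them through `∫ θ² log (2 cos θ) dθ`, which the Taylor
series of `log (1 + z)` and Abel's limit theorem evaluate as `-(π/2) ζ(3)`.
-/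

open Complex MeasureTheory Filter Topology Set intervalIntegral
open scoped Real Nat Interval

section IteratedIntegrals

theorem Omega_singleton (f : ℂ → ℂ) (b : ℝ) : Omega [f] b = ∫ t in (0:ℝ)..b, f t := by
  simp [Omega]

theorem Omega_cons_cons (f g : ℂ → ℂ) (fs : List (ℂ → ℂ)) :
    Omega (f :: g :: fs) = Omega ((fun z ↦ Omega [f] z.re * g z) :: fs) := by
  simp [Omega]

theorem integral_mul_pow_succ_div_factorial {f g B : ℝ → ℂ} {a b : ℝ} (hf : Continuous f)
    (hg : Continuous g) (hB : ∀ t, HasDerivAt B (-g t) t) (hBb : B b = 0) (n : ℕ) :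
    ∫ t in a..b, f t * (B t ^ (n + 1) / (n + 1)!) =
      ∫ t in a..b, (∫ s in a..t, f s) * g t * (B t ^ n / n !) := by
  have hBc : Continuous B := continuous_iff_continuousAt.2 fun t ↦ (hB t).continuousAt
  have hderiv (t : ℝ) :
      HasDerivAt (fun t ↦ B t ^ (n + 1) / (n + 1)!) (-(g t * (B t ^ n / n !))) t := by
    refine (((hB t).pow (n + 1)).div_const ((n + 1)! : ℂ)).congr_deriv ?_
    have hn : (n ! : ℂ) ≠ 0 := mod_cast n.factorial_ne_zero
    push_cast [Nat.factorial_succ, Nat.add_sub_cancel]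
    field_simp
  have hparts := integral_mul_deriv_eq_deriv_mul (a := a) (b := b)
    (fun t _ ↦ (hf.integral_hasStrictDerivAt a t).hasDerivAt) (fun t _ ↦ hderiv t)
    (hf.intervalIntegrable a b)
    (Continuous.intervalIntegrable (by fun_prop) a b)
  simp only [hBb, integral_same, mul_neg, intervalIntegral.integral_neg, ne_eq, Nat.succ_ne_zero,
    not_false_eq_true, zero_pow, zero_div, mul_zero, zero_mul, sub_zero, zero_sub,
    neg_inj] at hparts
  simp only [hparts, mul_assoc]

theorem Omega_cons_replicate {f g : ℂ → ℂ} {B : ℝ → ℂ} {b : ℝ} (n : ℕ)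
    (hf : Continuous fun t : ℝ ↦ f t) (hg : Continuous fun t : ℝ ↦ g t)
    (hB : ∀ t : ℝ, HasDerivAt B (-g t) t) (hBb : B b = 0) :
    Omega (f :: List.replicate n g) b = ∫ t in (0:ℝ)..b, f t * (B t ^ n / n !) := by
  induction n generalizing f with
  | zero => simp [Omega_singleton]
  | succ n ih =>
    have hcont : Continuous fun t : ℝ ↦ Omega [f] (t : ℂ).re * g t := by
      simp only [Omega_singleton, ofReal_re]
      exact (continuous_primitive (fun _ _ ↦ hf.intervalIntegrable _ _) 0).mul hg
    rw [List.replicate_succ, Omega_cons_cons, ih hcont,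
      integral_mul_pow_succ_div_factorial hf hg hB hBb]
    simp only [Omega_singleton, ofReal_re]

end IteratedIntegrals

section PartialFractions

theorem p₁_sq : p₁ ^ 2 = I := by
  rw [p₁, ← exp_nat_mul, show ((2 : ℕ) : ℂ) * (I * (π / 4)) = π / 2 * I by push_cast; ring,
    exp_pi_div_two_mul_I]

theorem p₁_mul_p₂ : p₁ * p₂ = -1 := by
  rw [p₁, p₂, mul_neg, ← exp_add, add_neg_cancel, exp_zero]

theorem p₂_sq : p₂ ^ 2 = -I := by
  have h : p₁ ^ 2 * p₂ ^ 2 = 1 := by rw [← mul_pow, p₁_mul_p₂]; norm_num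
  rw [p₁_sq] at h
  linear_combination -I * h + p₂ ^ 2 * I_sq

theorem p₁_sub_p₂ : p₁ - p₂ = (√2 : ℝ) := by
  have h := two_cos (π / 4)
  rw [p₁, p₂, sub_neg_eq_add, mul_comm I, ← neg_mul, ← h]
  norm_cast
  rw [Real.cos_pi_div_four]
  ring

theorem one_add_pow_four_eq (z : ℂ) :
    1 + z ^ 4 = (z - p₁) * (z - p₂) * (z - p₃) * (z - p₄) := by
  rw [p₃, p₄]
  linear_combination (z ^ 2 - p₂ ^ 2) * p₁_sq + (z ^ 2 - I) * p₂_sq + I_sq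

theorem F₁_eq {z : ℂ} (hz : 1 + z ^ 4 ≠ 0) : F₁ z = 4 * I * z / (1 + z ^ 4) := by
  have hfac := one_add_pow_four_eq z
  simp only [hfac, mul_ne_zero_iff] at hz
  obtain ⟨⟨⟨h₁, h₂⟩, h₃⟩, h₄⟩ := hz
  rw [F₁, hfac]
  field_simp
  rw [p₃, p₄]
  linear_combination 2 * z * p₁_sq - 2 * z * p₂_sq

theorem F₂_eq {z : ℂ} (hz : 1 + z ^ 4 ≠ 0) :
    F₂ z = -(2 * (√2 : ℝ)) * (1 - z ^ 2) / (1 + z ^ 4) := by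
  have hfac := one_add_pow_four_eq z
  simp only [hfac, mul_ne_zero_iff] at hz
  obtain ⟨⟨⟨h₁, h₂⟩, h₃⟩, h₄⟩ := hz
  rw [F₂, hfac, ← p₁_sub_p₂]
  field_simp
  rw [p₃, p₄]
  linear_combination 2 * (p₁ - p₂) * p₁_mul_p₂

theorem one_add_ofReal_pow_four_ne_zero (t : ℝ) : 1 + (t : ℂ) ^ 4 ≠ 0 := by
  have : 1 + t ^ 4 ≠ 0 := by positivity
  exact_mod_cast this

theorem continuous_F₁_ofReal : Continuous fun t : ℝ ↦ F₁ t := by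
  simp only [F₁_eq (one_add_ofReal_pow_four_ne_zero _)]
  exact Continuous.div (by fun_prop) (by fun_prop) one_add_ofReal_pow_four_ne_zero

theorem continuous_F₂_ofReal : Continuous fun t : ℝ ↦ F₂ t := by
  simp only [F₂_eq (one_add_ofReal_pow_four_ne_zero _)]
  exact Continuous.div (by fun_prop) (by fun_prop) one_add_ofReal_pow_four_ne_zero

/-- The angle `θ = π/2 - 2 arctan t²`, in which `F₁ dt = -i dθ` and
`F₂ dt = 2 sin (θ/2) / √(2 cos θ) dθ`. -/
def angle (t : ℝ) : ℝ := π / 2 - 2 * Real.arctan (t ^ 2)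

theorem angle_zero : angle 0 = π / 2 := by simp [angle]

theorem angle_one : angle 1 = 0 := by
  rw [angle, one_pow, Real.arctan_one]
  ring

theorem hasDerivAt_angle (t : ℝ) : HasDerivAt angle (-(4 * t / (1 + t ^ 4))) t := by
  refine (((hasDerivAt_pow 2 t).arctan.const_mul 2).const_sub (π / 2)).congr_deriv ?_
  push_cast
  ring

theorem cos_angle (t : ℝ) : Real.cos (angle t) = 2 * t ^ 2 / (1 + t ^ 4) := by
  have h : √(1 + (t ^ 2) ^ 2) ^ 2 = 1 + t ^ 4 := by
    rw [Real.sq_sqrt (by positivity)]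
    ring
  rw [angle, Real.cos_pi_div_two_sub, Real.sin_two_mul, Real.sin_arctan, Real.cos_arctan, ← h]
  field_simp

theorem sin_half_angle (t : ℝ) :
    Real.sin (angle t / 2) = √2 / 2 * (1 - t ^ 2) / √(1 + t ^ 4) := by
  rw [angle, show (π / 2 - 2 * Real.arctan (t ^ 2)) / 2 = π / 4 - Real.arctan (t ^ 2) by ring,
    Real.sin_sub, Real.sin_arctan, Real.cos_arctan, Real.sin_pi_div_four, Real.cos_pi_div_four,
    ← pow_mul]
  ring

theorem sqrt_two_mul_cos_angle {t : ℝ} (ht : 0 ≤ t) :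
    √(2 * Real.cos (angle t)) = 2 * t / √(1 + t ^ 4) := by
  rw [cos_angle, show 2 * (2 * t ^ 2 / (1 + t ^ 4)) = (2 * t) ^ 2 / (1 + t ^ 4) by ring,
    Real.sqrt_div (by positivity), Real.sqrt_sq (by positivity)]

theorem integral_comp_angle (G : ℝ → ℝ) :
    ∫ t in (0:ℝ)..1, √2 * ((1 - t ^ 2) / (1 + t ^ 4)) * G (angle t) =
      ∫ θ in (0:ℝ)..(π / 2), G θ * (Real.sin (θ / 2) / √(2 * Real.cos θ)) := by
  have hsubst := integral_comp_mul_deriv_of_deriv_nonpos (a := 0) (b := 1)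
    (g := fun θ ↦ G θ * (Real.sin (θ / 2) / √(2 * Real.cos θ)))
    (fun t _ ↦ (hasDerivAt_angle t).continuousAt.continuousWithinAt)
    (fun t _ ↦ hasDerivAt_angle t) fun t ht ↦ by
      have : 0 < t := by simpa using ht.1
      exact neg_nonpos.2 (by positivity)
  rw [angle_zero, angle_one, integral_symm 0 (π / 2)] at hsubst
  rw [← neg_inj, ← hsubst, ← intervalIntegral.integral_neg]
  refine integral_congr_uIoo fun t ht ↦ ?_
  have ht : 0 < t := by simpa using ht.1
  simp only [Function.comp, sin_half_angle, sqrt_two_mul_cos_angle ht.le]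
  field_simp
  ring

theorem Omega_F₂_cons_replicate_F₁ (n : ℕ) :
    Omega (F₂ :: List.replicate n F₁) 1 = -2 * I ^ n / n ! *
      (∫ θ in (0:ℝ)..(π / 2), θ ^ n * (Real.sin (θ / 2) / √(2 * Real.cos θ)) : ℝ) := by
  have hderiv (t : ℝ) : HasDerivAt (fun t ↦ I * (angle t : ℂ)) (-F₁ t) t := by
    refine ((hasDerivAt_angle t).ofReal_comp.const_mul I).congr_deriv ?_
    rw [F₁_eq (one_add_ofReal_pow_four_ne_zero t)]
    push_cast
    ring
  rw [Omega_cons_replicate n continuous_F₂_ofReal continuous_F₁_ofReal hderiv (by simp [angle_one]),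
    ← integral_comp_angle (· ^ n), ← intervalIntegral.integral_ofReal,
    ← intervalIntegral.integral_const_mul]
  refine integral_congr fun t _ ↦ ?_
  simp only [F₂_eq (one_add_ofReal_pow_four_ne_zero t)]
  push_cast
  ring

end PartialFractions

section IntervalIntegrals

variable {a b : ℝ}

theorem ae_mem_uIoc_of_forall_mem_Ioo {P : ℝ → Prop} (hab : a ≤ b) (h : ∀ y ∈ Ioo a b, P y) :
    ∀ᵐ y, y ∈ Ι a b → P y := by
  filter_upwards [Measure.ae_ne volume b] with y hyb hy
  rw [uIoc_of_le hab] at hy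
  exact h y ⟨hy.1, hy.2.lt_of_ne hyb⟩

theorem intervalIntegrable_of_norm_le_Ioo {E : Type*} [NormedAddCommGroup E] {f : ℝ → E}
    {g : ℝ → ℝ} (hab : a ≤ b) (hg : IntervalIntegrable g volume a b) (hf : AEStronglyMeasurable f)
    (hfg : ∀ y ∈ Ioo a b, ‖f y‖ ≤ g y) : IntervalIntegrable f volume a b :=
  hg.mono_fun' hf.restrict <|
    (ae_restrict_iff' measurableSet_uIoc).2 (ae_mem_uIoc_of_forall_mem_Ioo hab hfg)

theorem tendsto_integral_vertical_nhdsLT {Φ : ℂ → ℂ} {g : ℝ → ℝ} (hab : a ≤ b)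
    (hΦ : ∀ x : ℝ, x < 0 → Continuous fun y : ℝ ↦ Φ (x + y * I))
    (hΦ_zero : ∀ y ∈ Ioo a b, ContinuousAt Φ (y * I))
    (hΦ_le : ∀ x : ℝ, x < 0 → ∀ y ∈ Ioo a b, ‖Φ (x + y * I)‖ ≤ g y)
    (hg : IntervalIntegrable g volume a b) :
    Tendsto (fun x : ℝ ↦ ∫ y in a..b, Φ (x + y * I)) (𝓝[<] 0) (𝓝 (∫ y in a..b, Φ (y * I))) := by
  refine tendsto_integral_filter_of_dominated_convergence g ?_ ?_ hg ?_
  · filter_upwards [self_mem_nhdsWithin] with x hx using (hΦ x hx).aestronglyMeasurable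
  · filter_upwards [self_mem_nhdsWithin] with x hx
    exact ae_mem_uIoc_of_forall_mem_Ioo hab (hΦ_le x hx)
  · refine ae_mem_uIoc_of_forall_mem_Ioo hab fun y hy ↦ ?_
    have hline : Tendsto (fun x : ℝ ↦ (x + y * I : ℂ)) (𝓝[<] 0) (𝓝 (y * I)) := by
      have : Continuous fun x : ℝ ↦ (x + y * I : ℂ) := by fun_prop
      simpa using (this.tendsto 0).mono_left nhdsWithin_le_nhds
    exact (hΦ_zero y hy).tendsto.comp hline

theorem sub_eq_integral_of_tendsto {G f : ℝ → ℝ} {A B : ℝ} (hab : a < b)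
    (hf : IntervalIntegrable f volume a b)
    (hG : ∀ δ ∈ Ioo a b, ∀ ε ∈ Ioo a b, G δ - G ε = ∫ t in δ..ε, f t)
    (hA : Tendsto G (𝓝[>] a) (𝓝 A)) (hB : Tendsto G (𝓝[<] b) (𝓝 B)) :
    A - B = ∫ t in a..b, f t := by
  have hprim (c : ℝ) (hc : c ∈ Icc a b) : ContinuousOn (fun x ↦ ∫ t in c..x, f t) (Icc a b) := by
    rw [← uIcc_of_le hab.le] at hc ⊢
    exact continuousOn_primitive_interval' hf hc
  have hright : ∀ δ ∈ Ioo a b, G δ - B = ∫ t in δ..b, f t := fun δ hδ ↦ by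
    have hlim := (hprim δ (Ioo_subset_Icc_self hδ) b (right_mem_Icc.2 hab.le)).mono
      Ioo_subset_Icc_self
    rw [ContinuousWithinAt, nhdsWithin_Ioo_eq_nhdsLT hab] at hlim
    refine tendsto_nhds_unique ((tendsto_const_nhds.sub hB).congr' ?_) hlim
    filter_upwards [Ioo_mem_nhdsLT hab] with ε hε using hG δ hδ ε hε
  have hlim : ContinuousWithinAt (fun x ↦ ∫ t in x..b, f t) (Ioo a b) a := by
    simp_rw [integral_symm b]
    exact ((hprim b (right_mem_Icc.2 hab.le) a (left_mem_Icc.2 hab.le)).mono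
      Ioo_subset_Icc_self).neg
  rw [ContinuousWithinAt, nhdsWithin_Ioo_eq_nhdsGT hab] at hlim
  refine tendsto_nhds_unique ((hA.sub tendsto_const_nhds).congr' ?_) hlim
  filter_upwards [Ioo_mem_nhdsGT hab] with δ hδ using hright δ hδ

end IntervalIntegrals

section LogBounds

theorem abs_log_add_pow_le {s A : ℝ} (hs : 0 < s) (hs₁ : s ≤ 1) (hA : 0 ≤ A) (n : ℕ) :
    (|Real.log s| + A) ^ n ≤ 2 ^ n * n ! * Real.exp (A / 2) * s ^ (-(1 / 2) : ℝ) := by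
  have h := Real.pow_div_factorial_le_exp (x := (|Real.log s| + A) / 2) (by positivity) n
  rw [abs_of_nonpos (Real.log_nonpos hs.le hs₁), div_pow, div_div,
    div_le_iff₀ (by positivity)] at h
  rw [abs_of_nonpos (Real.log_nonpos hs.le hs₁), Real.rpow_def_of_pos hs, mul_assoc _ (Real.exp _),
    ← Real.exp_add]
  calc (-Real.log s + A) ^ n ≤ Real.exp ((-Real.log s + A) / 2) * (2 ^ n * n !) := h
    _ = _ := by ring_nf

theorem intervalIntegrable_sin_rpow {a : ℝ} (ha : -1 < a) :
    IntervalIntegrable (fun x ↦ Real.sin x ^ a) volume 0 (π / 2) := by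
  rcases le_or_gt 0 a with h | h
  · exact (Real.continuous_sin.rpow_const fun _ ↦ Or.inr h).intervalIntegrable _ _
  refine intervalIntegrable_of_norm_le_Ioo (by positivity)
    ((intervalIntegrable_rpow' ha).const_mul ((2 / π) ^ a))
    (Real.measurable_sin.pow_const a).aestronglyMeasurable fun x hx ↦ ?_
  have hx_pos := hx.1
  have hsin : 2 / π * x ≤ Real.sin x := Real.mul_le_sin hx.1.le hx.2.le
  have hsin_pos : 0 < 2 / π * x := by positivity
  rw [Real.norm_of_nonneg (by have := hsin_pos.trans_le hsin; positivity),
    ← Real.mul_rpow (by positivity) hx.1.le]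
  exact Real.rpow_le_rpow_of_nonpos hsin_pos hsin h.le

theorem intervalIntegrable_cos_rpow {a : ℝ} (ha : -1 < a) :
    IntervalIntegrable (fun y ↦ Real.cos y ^ a) volume (-(π / 2)) (π / 2) := by
  have hright : IntervalIntegrable (fun y ↦ Real.cos y ^ a) volume 0 (π / 2) := by
    simpa [Real.sin_pi_div_two_sub] using
      ((intervalIntegrable_sin_rpow ha).comp_sub_left (π / 2)).symm
  have hleft := (IntervalIntegrable.iff_comp_neg (by finiteness)).1 hright
  simp only [Real.cos_neg, neg_zero] at hleft
  exact hleft.symm.trans hright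

theorem intervalIntegrable_abs_log_cos_add_pow {A : ℝ} (hA : 0 ≤ A) (n : ℕ) :
    IntervalIntegrable (fun y ↦ (|Real.log (Real.cos y)| + A) ^ n) volume (-(π / 2)) (π / 2) := by
  refine intervalIntegrable_of_norm_le_Ioo (by linarith [Real.pi_pos])
    ((intervalIntegrable_cos_rpow (by norm_num : (-1 : ℝ) < -(1 / 2))).const_mul
      (2 ^ n * n ! * Real.exp (A / 2)))
    (Measurable.aestronglyMeasurable (by fun_prop)) fun y hy ↦ ?_
  rw [Real.norm_of_nonneg (by positivity)]
  exact abs_log_add_pow_le (Real.cos_pos_of_mem_Ioo hy) (Real.cos_le_one y) hA n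

theorem intervalIntegrable_log_cos_add_pow (z : ℂ) (n : ℕ) :
    IntervalIntegrable (fun y ↦ ((Real.log (Real.cos y) : ℂ) + z) ^ n) volume
      (-(π / 2)) (π / 2) := by
  refine intervalIntegrable_of_norm_le_Ioo (by linarith [Real.pi_pos])
    (intervalIntegrable_abs_log_cos_add_pow (norm_nonneg z) n)
    (Measurable.aestronglyMeasurable (by fun_prop)) fun y _ ↦ ?_
  rw [norm_pow]
  gcongr
  exact (norm_add_le _ _).trans_eq (by simp)

theorem norm_log_le {w : ℂ} {s : ℝ} (hs : 0 < s) (hsw : s ≤ ‖w‖) (hw : ‖w‖ ≤ 2) :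
    ‖log w‖ ≤ |Real.log s| + 4 := by
  have hlog : |Real.log ‖w‖| ≤ |Real.log s| + 0.7 := by
    have hlower := Real.log_le_log hs hsw
    have hupper := Real.log_le_log (hs.trans_le hsw) hw
    have := neg_abs_le (Real.log s)
    have := abs_nonneg (Real.log s)
    rw [abs_le]
    constructor <;> linarith [Real.log_two_lt_d9]
  calc ‖log w‖ ≤ |(log w).re| + |(log w).im| := norm_le_abs_re_add_abs_im _
    _ = |Real.log ‖w‖| + |arg w| := by rw [log_re, log_im]
    _ ≤ |Real.log s| + 0.7 + π := add_le_add hlog (abs_arg_le_pi w)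
    _ ≤ |Real.log s| + 4 := by linarith [Real.pi_lt_d2]

end LogBounds

section OneAddExp

theorem one_add_exp_two_mul_mul_I (z : ℂ) :
    1 + exp (2 * (z * I)) = 2 * cos z * exp (z * I) := by
  rw [two_cos, add_mul, ← exp_add, ← exp_add, neg_mul, neg_add_cancel, exp_zero]
  ring_nf

theorem norm_exp_two_mul (ζ : ℂ) : ‖exp (2 * ζ)‖ = Real.exp (2 * ζ.re) := by
  simp [norm_exp]

theorem one_add_exp_two_mul_mem_slitPlane {ζ : ℂ} (hζ : ζ.re < 0) :
    1 + exp (2 * ζ) ∈ slitPlane := by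
  refine mem_slitPlane_of_norm_lt_one ?_
  rw [norm_exp_two_mul, Real.exp_lt_one_iff]
  linarith

theorem one_add_exp_two_mul_mul_I_mem_slitPlane {y : ℝ} (hy : y ∈ Ioo (-(π / 2)) (π / 2)) :
    1 + exp (2 * (y * I)) ∈ slitPlane := by
  have hcos := Real.cos_pos_of_mem_Ioo hy
  refine Or.inl ?_
  rw [one_add_exp_two_mul_mul_I, ← ofReal_cos, mul_assoc, ← ofReal_ofNat, re_ofReal_mul,
    re_ofReal_mul, exp_ofReal_mul_I_re]
  positivity

theorem log_one_add_exp_two_mul_mul_I {y : ℝ} (hy : y ∈ Ioo (-(π / 2)) (π / 2)) :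
    log (1 + exp (2 * (y * I))) = (Real.log (2 * Real.cos y) : ℂ) + y * I := by
  have hcos := Real.cos_pos_of_mem_Ioo hy
  have hpi := Real.pi_pos
  rw [one_add_exp_two_mul_mul_I, ← ofReal_cos, ← ofReal_ofNat, ← ofReal_mul,
    log_ofReal_mul (by positivity) (exp_ne_zero _), log_exp]
  · simpa using by linarith [hy.1]
  · simpa using by linarith [hy.2]

theorem norm_one_add_le_two_mul_norm_one_add_mul {u : ℂ} {r : ℝ} (hu : ‖u‖ ≤ 1) (hr : 0 ≤ r)
    (hr₁ : r ≤ 1) : ‖1 + u‖ ≤ 2 * ‖1 + r * u‖ := by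
  have hlower : 1 - r ≤ ‖1 + r * u‖ := by
    have h := norm_sub_le_norm_add (1 : ℂ) (r * u)
    rw [norm_one, norm_mul, Complex.norm_of_nonneg hr] at h
    nlinarith
  calc ‖1 + u‖ = ‖(1 + r * u) + (1 - r : ℝ) * u‖ := by push_cast; ring_nf
    _ ≤ ‖1 + r * u‖ + (1 - r) * ‖u‖ := by
      refine (norm_add_le _ _).trans_eq ?_
      rw [norm_mul, Complex.norm_of_nonneg (sub_nonneg.2 hr₁)]
    _ ≤ 2 * ‖1 + r * u‖ := by nlinarith

theorem cos_im_le_norm_one_add_exp_two_mul {ζ : ℂ} (hζ : ζ.re ≤ 0) :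
    Real.cos ζ.im ≤ ‖1 + exp (2 * ζ)‖ := by
  have hpolar : exp (2 * ζ) = Real.exp (2 * ζ.re) * exp (2 * (ζ.im * I)) := by
    rw [ofReal_exp, ← exp_add]
    push_cast
    rw [← mul_add, re_add_im]
  have h := norm_one_add_le_two_mul_norm_one_add_mul (u := exp (2 * (ζ.im * I)))
    (by simp [norm_exp]) (Real.exp_nonneg (2 * ζ.re)) (Real.exp_le_one_iff.2 (by linarith))
  rw [← hpolar, one_add_exp_two_mul_mul_I, ← ofReal_cos, norm_mul, norm_mul, norm_real,
    norm_exp_ofReal_mul_I, norm_ofNat, mul_one] at h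
  exact (Real.le_norm_self _).trans (by linarith)

theorem norm_one_add_exp_two_mul_le {ζ : ℂ} (hζ : ζ.re ≤ 0) : ‖1 + exp (2 * ζ)‖ ≤ 2 := by
  have h : ‖exp (2 * ζ)‖ ≤ 1 := by
    rw [norm_exp_two_mul, Real.exp_le_one_iff]
    linarith
  linarith [norm_add_le 1 (exp (2 * ζ)), norm_one (α := ℂ)]

theorem norm_log_one_add_exp_two_mul_le {ζ : ℂ} (hζ : ζ.re ≤ 0) (hcos : 0 < Real.cos ζ.im) :
    ‖log (1 + exp (2 * ζ))‖ ≤ |Real.log (Real.cos ζ.im)| + 4 :=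
  norm_log_le hcos (cos_im_le_norm_one_add_exp_two_mul hζ)
    (norm_one_add_exp_two_mul_le hζ)

theorem tendsto_integral_mul_log_one_add_exp_pow {c : ℝ → ℂ} (hc : Continuous c) (n : ℕ) :
    Tendsto (fun x : ℝ ↦ ∫ y in -(π / 2)..(π / 2), c y * log (1 + exp (2 * (x + y * I))) ^ n)
      (𝓝[<] 0) (𝓝 (∫ y in -(π / 2)..(π / 2), c y * log (1 + exp (2 * (y * I))) ^ n)) := by
  have hpi := Real.pi_pos
  have hdom := (intervalIntegrable_abs_log_cos_add_pow zero_le_four n).continuousOn_mul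
    hc.norm.continuousOn
  have hlim := tendsto_integral_vertical_nhdsLT
    (Φ := fun ζ ↦ c ζ.im * log (1 + exp (2 * ζ)) ^ n) (by linarith) ?_ ?_ ?_ hdom
  · simpa using hlim
  · intro x hx
    have : ∀ y : ℝ, 1 + exp (2 * (x + y * I)) ∈ slitPlane := fun y ↦
      one_add_exp_two_mul_mem_slitPlane (by simpa using hx)
    exact (by fun_prop : Continuous fun y : ℝ ↦ c (x + y * I : ℂ).im).mul
      ((Continuous.clog (by fun_prop) this).pow n)
  · intro y hy
    have := one_add_exp_two_mul_mul_I_mem_slitPlane hy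
    fun_prop (disch := assumption)
  · intro x hx y hy
    rw [norm_mul, norm_pow]
    have h := norm_log_one_add_exp_two_mul_le (ζ := x + y * I) (by simpa using hx.le)
      (by simpa using Real.cos_pos_of_mem_Ioo hy)
    have him : (x + y * I : ℂ).im = y := by simp
    rw [him] at h ⊢
    gcongr

end OneAddExp

section Moments

theorem integral_log_one_add_exp_pow_of_neg {x : ℝ} (hx : x < 0) {n : ℕ} (hn : n ≠ 0) :
    ∫ y in -(π / 2)..(π / 2), log (1 + exp (2 * (x + y * I))) ^ n = 0 := by
  set r := Real.exp (2 * x)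
  have hr : |r| < 1 := by
    rw [Real.abs_exp, Real.exp_lt_one_iff]
    linarith
  have hdiff : DiffContOnCl ℂ (fun z : ℂ ↦ log (1 + z) ^ n) (Metric.ball 0 |r|) := by
    refine DifferentiableOn.diffContOnCl fun z hz ↦ ?_
    have hz : ‖z‖ ≤ |r| := by simpa using Metric.closure_ball_subset_closedBall hz
    have : 1 + z ∈ slitPlane := mem_slitPlane_of_norm_lt_one (hz.trans_lt hr)
    exact (((differentiableAt_id.const_add 1).clog this).pow n).differentiableWithinAt
  have hmean : ∫ θ in (0:ℝ)..(2 * π), log (1 + circleMap 0 r θ) ^ n = 0 := by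
    simpa [Real.circleAverage_def, hn] using hdiff.circleAverage
  have hcircle (y : ℝ) : circleMap 0 r (y * 2) = exp (2 * (x + y * I)) := by
    rw [circleMap_zero, ofReal_exp, ← exp_add]
    push_cast
    ring_nf
  have hperiodic : Function.Periodic (fun y : ℝ ↦ log (1 + circleMap 0 r (y * 2)) ^ n) π :=
    fun y ↦ by simp only [add_mul, mul_comm π 2, periodic_circleMap 0 r _]
  calc ∫ y in -(π / 2)..(π / 2), log (1 + exp (2 * (x + y * I))) ^ n
      = ∫ y in -(π / 2)..(-(π / 2) + π), log (1 + circleMap 0 r (y * 2)) ^ n := by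
        simp only [hcircle]
        ring_nf
    _ = ∫ y in (0:ℝ)..(0 + π), log (1 + circleMap 0 r (y * 2)) ^ n :=
        hperiodic.intervalIntegral_add_eq _ _
    _ = 0 := by
        rw [integral_comp_mul_right (fun θ ↦ log (1 + circleMap 0 r θ) ^ n) two_ne_zero, zero_mul,
          zero_add, mul_comm π, hmean, smul_zero]

theorem integral_log_one_add_exp_pow {n : ℕ} (hn : n ≠ 0) :
    ∫ y in -(π / 2)..(π / 2), log (1 + exp (2 * (y * I))) ^ n = 0 := by
  have hlim := tendsto_integral_mul_log_one_add_exp_pow (c := fun _ ↦ 1) continuous_const n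
  simp only [one_mul] at hlim
  refine tendsto_nhds_unique hlim (tendsto_const_nhds.congr' ?_)
  filter_upwards [self_mem_nhdsWithin] with x hx
  exact (integral_log_one_add_exp_pow_of_neg hx hn).symm

theorem intervalIntegrable_log_one_add_exp_pow (n : ℕ) :
    IntervalIntegrable (fun y : ℝ ↦ log (1 + exp (2 * (y * I))) ^ n) volume
      (-(π / 2)) (π / 2) := by
  refine intervalIntegrable_of_norm_le_Ioo (by linarith [Real.pi_pos])
    (intervalIntegrable_abs_log_cos_add_pow zero_le_four n)
    (Measurable.aestronglyMeasurable (by fun_prop)) fun y hy ↦ ?_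
  rw [norm_pow]
  gcongr
  simpa using norm_log_one_add_exp_two_mul_le (ζ := y * I) (by simp)
    (by simpa using Real.cos_pos_of_mem_Ioo hy)

theorem intervalIntegrable_log_two_mul_cos_pow (n : ℕ) :
    IntervalIntegrable (fun y ↦ Real.log (2 * Real.cos y) ^ n) volume (-(π / 2)) (π / 2) := by
  refine intervalIntegrable_of_norm_le_Ioo (by linarith [Real.pi_pos])
    (intervalIntegrable_log_one_add_exp_pow n).norm
    (Measurable.aestronglyMeasurable (by fun_prop)) fun y hy ↦ ?_
  rw [norm_pow, norm_pow, log_one_add_exp_two_mul_mul_I hy]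
  gcongr
  simpa using abs_re_le_norm ((Real.log (2 * Real.cos y) : ℂ) + y * I)

theorem integral_re_log_two_mul_cos_add_mul_I_pow {n : ℕ} (hn : n ≠ 0) :
    ∫ y in -(π / 2)..(π / 2), (((Real.log (2 * Real.cos y) : ℂ) + y * I) ^ n).re = 0 := by
  have hre := reCLM.intervalIntegral_comp_comm (intervalIntegrable_log_one_add_exp_pow n)
  rw [integral_log_one_add_exp_pow hn, map_zero] at hre
  rw [← hre]
  refine integral_congr_uIoo fun y hy ↦ ?_
  rw [uIoo_of_le (by linarith [Real.pi_pos])] at hy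
  simp only [reCLM_apply, log_one_add_exp_two_mul_mul_I hy]

theorem integral_log_two_mul_cos :
    ∫ y in -(π / 2)..(π / 2), Real.log (2 * Real.cos y) = 0 := by
  simpa using integral_re_log_two_mul_cos_add_mul_I_pow one_ne_zero

theorem integral_log_two_mul_cos_sq :
    ∫ y in -(π / 2)..(π / 2), Real.log (2 * Real.cos y) ^ 2 = π ^ 3 / 12 := by
  have h := integral_re_log_two_mul_cos_add_mul_I_pow two_ne_zero
  have hre (y : ℝ) : (((Real.log (2 * Real.cos y) : ℂ) + y * I) ^ 2).re =
      Real.log (2 * Real.cos y) ^ 2 - y ^ 2 := by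
    simp [pow_two]
  simp only [hre] at h
  rw [intervalIntegral.integral_sub (intervalIntegrable_log_two_mul_cos_pow 2)
    (Continuous.intervalIntegrable (by fun_prop) _ _), integral_pow, sub_eq_zero] at h
  rw [h]
  push_cast
  ring

theorem re_add_mul_I_cube (x y : ℝ) : ((x + y * I : ℂ) ^ 3).re = x ^ 3 - 3 * (y ^ 2 * x) := by
  simp only [pow_succ, pow_zero, one_mul, mul_re, mul_im, add_re, add_im, ofReal_re, ofReal_im,
    I_re, I_im]
  ring

theorem integral_log_two_mul_cos_cube :
    ∫ y in -(π / 2)..(π / 2), Real.log (2 * Real.cos y) ^ 3 =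
      3 * ∫ y in -(π / 2)..(π / 2), y ^ 2 * Real.log (2 * Real.cos y) := by
  have h := integral_re_log_two_mul_cos_add_mul_I_pow three_ne_zero
  have hint := intervalIntegrable_log_two_mul_cos_pow 1
  simp only [pow_one] at hint
  simp only [re_add_mul_I_cube] at h
  rwa [intervalIntegral.integral_sub (intervalIntegrable_log_two_mul_cos_pow 3)
    ((hint.continuousOn_mul (by fun_prop)).const_mul 3), intervalIntegral.integral_const_mul,
    sub_eq_zero] at h

theorem hasSum_integral_mul_log_one_add_exp {c : ℝ → ℂ} (hc : Continuous c) {x a b : ℝ}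
    (hx : x < 0) :
    HasSum (fun k : ℕ ↦ (-1) ^ (k + 1) / k * (∫ y in a..b, c y * exp (2 * (y * I)) ^ k) *
        (Real.exp (2 * x) : ℂ) ^ k)
      (∫ y in a..b, c y * log (1 + exp (2 * (x + y * I)))) := by
  have hpolar (y : ℝ) : exp (2 * (x + y * I)) = Real.exp (2 * x) * exp (2 * (y * I)) := by
    rw [ofReal_exp, ← exp_add]
    push_cast
    ring_nf
  have hexp (y : ℝ) : ‖exp (2 * (x + y * I))‖ = Real.exp (2 * x) := by simp [norm_exp_two_mul]
  have hexp_lt : Real.exp (2 * x) < 1 := Real.exp_lt_one_iff.2 (by linarith)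
  have hsum : HasSum
      (fun k : ℕ ↦ ∫ y in a..b, c y * ((-1) ^ (k + 1) * exp (2 * (x + y * I)) ^ k / k))
      (∫ y in a..b, c y * log (1 + exp (2 * (x + y * I)))) := by
    refine hasSum_integral_of_dominated_convergence (fun k y ↦ ‖c y‖ * Real.exp (2 * x) ^ k)
      (fun k ↦ Continuous.aestronglyMeasurable (by fun_prop))
      (fun k ↦ .of_forall fun y _ ↦ ?_)
      (.of_forall fun y _ ↦ (summable_geometric_of_lt_one (by positivity) hexp_lt).mul_left _)
      ?_ (.of_forall fun y _ ↦ (hasSum_taylorSeries_log ((hexp y).trans_lt hexp_lt)).mul_left _)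
    · simp only [norm_mul, norm_div, norm_pow, norm_neg, norm_one, one_pow, one_mul, hexp,
        Complex.norm_natCast]
      gcongr
      rcases k.eq_zero_or_pos with rfl | hk
      · simp
      · exact div_le_self (by positivity) (mod_cast hk)
    · simp only [tsum_mul_left]
      exact Continuous.intervalIntegrable (by fun_prop) _ _
  refine hsum.congr_fun fun k ↦ ?_
  rw [mul_right_comm, ← intervalIntegral.integral_const_mul]
  refine integral_congr fun y _ ↦ ?_
  simp only [hpolar]
  ring

theorem integral_mul_log_one_add_exp_eq_of_hasSum {c : ℝ → ℂ} (hc : Continuous c) {l : ℂ}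
    (hl : HasSum (fun k : ℕ ↦ (-1) ^ (k + 1) / k *
      ∫ y in -(π / 2)..(π / 2), c y * exp (2 * (y * I)) ^ k) l) :
    ∫ y in -(π / 2)..(π / 2), c y * log (1 + exp (2 * (y * I))) = l := by
  have hlim := tendsto_integral_mul_log_one_add_exp_pow hc 1
  simp only [pow_one] at hlim
  have hexp : Tendsto (fun x : ℝ ↦ Real.exp (2 * x)) (𝓝[<] 0) (𝓝[<] 1) := by
    refine tendsto_nhdsWithin_iff.2 ⟨?_, ?_⟩
    · have : Continuous fun x : ℝ ↦ Real.exp (2 * x) := by fun_prop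
      simpa using (this.tendsto 0).mono_left nhdsWithin_le_nhds
    · filter_upwards [self_mem_nhdsWithin] with x hx
      exact Real.exp_lt_one_iff.2 (by linarith [mem_Iio.1 hx])
  have habel := (tendsto_map'_iff.1
    (tendsto_tsum_powerSeries_nhdsWithin_lt hl.tendsto_sum_nat)).comp hexp
  refine tendsto_nhds_unique hlim (habel.congr' ?_)
  filter_upwards [self_mem_nhdsWithin] with x hx
  exact (hasSum_integral_mul_log_one_add_exp hc hx).tsum_eq

theorem integral_sq_mul_exp {m : ℂ} (hm : m ≠ 0) (a b : ℝ) :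
    ∫ y in a..b, (y : ℂ) ^ 2 * exp (m * y) =
      (b ^ 2 / m - 2 * b / m ^ 2 + 2 / m ^ 3) * exp (m * b) -
        (a ^ 2 / m - 2 * a / m ^ 2 + 2 / m ^ 3) * exp (m * a) := by
  refine integral_eq_sub_of_hasDerivAt
    (f := fun y : ℝ ↦ ((y : ℂ) ^ 2 / m - 2 * y / m ^ 2 + 2 / m ^ 3) * exp (m * y))
    (fun y _ ↦ ?_) (Continuous.intervalIntegrable (by fun_prop) _ _)
  have hid := hasDerivAt_id (y : ℂ)
  refine ((((hid.pow 2).div_const m).sub ((hid.const_mul 2).div_const (m ^ 2))).add_const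
    (2 / m ^ 3) |>.mul (hid.const_mul m).cexp).comp_ofReal.congr_deriv ?_
  simp only [Pi.pow_apply, Pi.sub_apply, id]
  field_simp
  push_cast
  ring

theorem integral_sq_mul_exp_pow {k : ℕ} (hk : k ≠ 0) :
    ∫ y in -(π / 2)..(π / 2), (y : ℂ) ^ 2 * exp (2 * (y * I)) ^ k =
      (-1) ^ k * (π / (2 * k ^ 2)) := by
  have hk_cast : (k : ℂ) ≠ 0 := mod_cast hk
  have hm : 2 * k * I ≠ 0 := by simp [hk_cast]
  have hexp (y : ℝ) : exp (2 * (y * I)) ^ k = exp (2 * k * I * y) := by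
    rw [← exp_nat_mul]
    ring_nf
  have hright : exp (2 * k * I * (π / 2 : ℝ)) = (-1) ^ k := by
    rw [← hexp, ← exp_pi_mul_I]
    push_cast
    ring_nf
  have hleft : exp (2 * k * I * (-(π / 2) : ℝ)) = (-1) ^ k := by
    rw [ofReal_neg, mul_neg, exp_neg, hright, ← inv_pow, inv_neg, inv_one]
  simp only [hexp]
  rw [integral_sq_mul_exp hm, hleft, hright]
  push_cast
  field_simp
  linear_combination 4 * π * k * I * (-I_sq)

theorem hasSum_integral_sq_mul_exp_pow :
    HasSum (fun k : ℕ ↦ (-1) ^ (k + 1) / k *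
        ∫ y in -(π / 2)..(π / 2), (y : ℂ) ^ 2 * exp (2 * (y * I)) ^ k)
      (-(π / 2) * riemannZeta 3) := by
  have hzeta := zeta_nat_eq_tsum_of_gt_one (k := 3) (by norm_num)
  push_cast at hzeta
  have hsummable : Summable fun k : ℕ ↦ 1 / (k : ℂ) ^ 3 := by
    simpa using summable_ofReal.2 (Real.summable_one_div_nat_pow.2 (by norm_num : 1 < 3))
  refine (hzeta ▸ hsummable.hasSum.mul_left (-(π / 2 : ℂ))).congr_fun fun k ↦ ?_
  rcases eq_or_ne k 0 with rfl | hk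
  · simp
  · have hsign : (-1 : ℂ) ^ (k + 1) * (-1) ^ k = -1 := by
      rw [← pow_add, show k + 1 + k = 2 * k + 1 by ring, pow_succ, pow_mul]
      norm_num
    rw [integral_sq_mul_exp_pow hk]
    linear_combination (π / (2 * k ^ 3) : ℂ) * hsign

theorem integral_sq_mul_log_two_mul_cos :
    ((∫ y in -(π / 2)..(π / 2), y ^ 2 * Real.log (2 * Real.cos y) : ℝ) : ℂ) =
      -(π / 2) * riemannZeta 3 := by
  have hodd : ∫ y in -(π / 2)..(π / 2), y ^ 3 = 0 := by
    rw [integral_pow]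
    ring
  rw [← integral_mul_log_one_add_exp_eq_of_hasSum (by fun_prop)
    hasSum_integral_sq_mul_exp_pow]
  calc ((∫ y in -(π / 2)..(π / 2), y ^ 2 * Real.log (2 * Real.cos y) : ℝ) : ℂ)
      = (∫ y in -(π / 2)..(π / 2), ((y ^ 2 * Real.log (2 * Real.cos y) : ℝ) : ℂ)) +
          ∫ y in -(π / 2)..(π / 2), ((y ^ 3 : ℝ) : ℂ) * I := by
        simp only [intervalIntegral.integral_mul_const, intervalIntegral.integral_ofReal, hodd,
          ofReal_zero, zero_mul, add_zero]
    _ = ∫ y in -(π / 2)..(π / 2),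
          (((y ^ 2 * Real.log (2 * Real.cos y) : ℝ) : ℂ) + ((y ^ 3 : ℝ) : ℂ) * I) := by
        refine (intervalIntegral.integral_add ?_
          (Continuous.intervalIntegrable (by fun_prop) _ _)).symm
        have h := (intervalIntegrable_log_two_mul_cos_pow 1).continuousOn_mul
          (g := fun y ↦ y ^ 2) (by fun_prop)
        simp only [pow_one] at h
        exact ⟨h.1.ofReal, h.2.ofReal⟩
    _ = ∫ y in -(π / 2)..(π / 2), (y : ℂ) ^ 2 * log (1 + exp (2 * (y * I))) := by
        refine integral_congr_uIoo fun y hy ↦ ?_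
        rw [uIoo_of_le (by linarith [Real.pi_pos])] at hy
        simp only [log_one_add_exp_two_mul_mul_I hy]
        push_cast
        ring

theorem integral_eq_two_mul_of_even {f : ℝ → ℝ} {b : ℝ} (hf : f.Even)
    (hint : IntervalIntegrable f volume (-b) b) :
    ∫ y in (-b)..b, f y = 2 * ∫ y in (0:ℝ)..b, f y := by
  have hzero : (0 : ℝ) ∈ [[-b, b]] := by simp [mem_uIcc, le_total]
  have hleft : ∫ y in (-b)..0, f y = ∫ y in (0:ℝ)..b, f y := by
    have h := integral_comp_neg (a := 0) (b := b) f
    simp only [hf _, neg_zero] at h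
    exact h.symm
  rw [← integral_add_adjacent_intervals (b := 0)
    (hint.mono_set (uIcc_subset_uIcc_left hzero)) (hint.mono_set (uIcc_subset_uIcc_right hzero)),
    hleft]
  ring

theorem integral_re_log_cos_add_mul_I_cube (b : ℝ) :
    ((∫ y in -(π / 2)..(π / 2), (((Real.log (Real.cos y) : ℂ) + b * I) ^ 3).re : ℝ) : ℂ) =
      π * (Real.log 2 * (3 * b ^ 2 - π ^ 2 / 4) - Real.log 2 ^ 3) -
        3 * π / 2 * riemannZeta 3 := by
  set a := Real.log 2
  have hre : EqOn (fun y ↦ (((Real.log (Real.cos y) : ℂ) + b * I) ^ 3).re)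
      (fun y ↦ Real.log (2 * Real.cos y) ^ 3 - 3 * a * Real.log (2 * Real.cos y) ^ 2 +
        3 * (a ^ 2 - b ^ 2) * Real.log (2 * Real.cos y) ^ 1 + (3 * a * b ^ 2 - a ^ 3))
      (uIoo (-(π / 2)) (π / 2)) := by
    intro y hy
    rw [uIoo_of_le (by linarith [Real.pi_pos])] at hy
    simp only [re_add_mul_I_cube, Real.log_mul two_ne_zero (Real.cos_pos_of_mem_Ioo hy).ne', a]
    ring
  have hint := intervalIntegrable_log_two_mul_cos_pow
  rw [integral_congr_uIoo hre,
    intervalIntegral.integral_add (((hint 3).sub ((hint 2).const_mul _)).add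
      ((hint 1).const_mul _)) intervalIntegrable_const,
    intervalIntegral.integral_add ((hint 3).sub ((hint 2).const_mul _)) ((hint 1).const_mul _),
    intervalIntegral.integral_sub (hint 3) ((hint 2).const_mul _),
    intervalIntegral.integral_const_mul, intervalIntegral.integral_const_mul,
    intervalIntegral.integral_const, integral_log_two_mul_cos_cube, integral_log_two_mul_cos_sq]
  simp only [pow_one, integral_log_two_mul_cos, smul_eq_mul]
  push_cast [integral_sq_mul_log_two_mul_cos]
  ring

theorem two_mul_integral_re_log_cos_add_mul_I_pow (b : ℝ) (n : ℕ) :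
    2 * ∫ y in (0:ℝ)..(π / 2), (((Real.log (Real.cos y) : ℂ) + b * I) ^ n).re =
      ∫ y in -(π / 2)..(π / 2), (((Real.log (Real.cos y) : ℂ) + b * I) ^ n).re := by
  have hint := intervalIntegrable_log_cos_add_pow (b * I) n
  refine (integral_eq_two_mul_of_even (fun y ↦ by simp only [Real.cos_neg]) ?_).symm
  exact ⟨hint.1.re, hint.2.re⟩

end Moments

section Contour

/-- The pull-back of `(log w) ^ n / √(1 + w ^ 2) dw` along `w = exp ζ`, a holomorphic function of
`ζ` in the left half-plane. -/
def logKernel (n : ℕ) (ζ : ℂ) : ℂ :=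
  ζ ^ n * exp ζ * (1 + exp (2 * ζ)) ^ ((-(1 / 2) : ℝ) : ℂ)

variable (n : ℕ)

theorem differentiableAt_logKernel {ζ : ℂ} (hζ : ζ.re < 0) :
    DifferentiableAt ℂ (logKernel n) ζ := by
  have := one_add_exp_two_mul_mem_slitPlane hζ
  unfold logKernel
  fun_prop (disch := assumption)

theorem continuousAt_logKernel_mul_I {y : ℝ} (hy : y ∈ Ioo (-(π / 2)) (π / 2)) :
    ContinuousAt (logKernel n) (y * I) := by
  have := one_add_exp_two_mul_mul_I_mem_slitPlane hy
  unfold logKernel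
  fun_prop (disch := assumption)

theorem continuous_logKernel_vertical {x : ℝ} (hx : x < 0) :
    Continuous fun y : ℝ ↦ logKernel n (x + y * I) := by
  refine continuous_iff_continuousAt.2 fun y ↦ ?_
  have h := (differentiableAt_logKernel n (ζ := x + y * I) (by simpa using hx)).continuousAt
  exact h.comp (f := fun y : ℝ ↦ (x + y * I : ℂ)) (by fun_prop)

theorem norm_logKernel_le {ζ : ℂ} (hre : ζ.re ≤ 0) (him : ζ.im ∈ Ioo (-(π / 2)) (π / 2)) :
    ‖logKernel n ζ‖ ≤
      2 ^ n * n ! * Real.exp (1 + ζ.re / 2) * Real.cos ζ.im ^ (-(1 / 2) : ℝ) := by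
  have hcos := Real.cos_pos_of_mem_Ioo him
  have hζ : ‖ζ‖ / 2 ≤ 1 - ζ.re / 2 := by
    have h := norm_le_abs_re_add_abs_im ζ
    have := abs_lt.2 him
    rw [abs_of_nonpos hre] at h
    linarith [Real.pi_le_four]
  have hpow : ‖ζ‖ ^ n ≤ 2 ^ n * n ! * Real.exp (1 - ζ.re / 2) := by
    have h := Real.pow_div_factorial_le_exp (x := ‖ζ‖ / 2) (by positivity) n
    rw [div_pow, div_div, div_le_iff₀ (by positivity), mul_comm] at h
    exact h.trans (by gcongr)
  have hroot : ‖1 + exp (2 * ζ)‖ ^ (-(1 / 2) : ℝ) ≤ Real.cos ζ.im ^ (-(1 / 2) : ℝ) :=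
    Real.rpow_le_rpow_of_nonpos hcos (cos_im_le_norm_one_add_exp_two_mul hre) (by norm_num)
  calc ‖logKernel n ζ‖
      = ‖ζ‖ ^ n * Real.exp ζ.re * ‖1 + exp (2 * ζ)‖ ^ (-(1 / 2) : ℝ) := by
        rw [logKernel, norm_mul, norm_mul, norm_pow, norm_exp, norm_cpow_real]
    _ ≤ 2 ^ n * n ! * Real.exp (1 - ζ.re / 2) * Real.exp ζ.re *
          Real.cos ζ.im ^ (-(1 / 2) : ℝ) := by gcongr
    _ = 2 ^ n * n ! * Real.exp (1 + ζ.re / 2) * Real.cos ζ.im ^ (-(1 / 2) : ℝ) := by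
        rw [mul_assoc _ _ (Real.exp _), ← Real.exp_add]
        ring_nf

theorem logKernel_ofReal_im (x : ℝ) : (logKernel n x).im = 0 := by
  have h : logKernel n x =
      (x ^ n * Real.exp x * (1 + Real.exp (2 * x)) ^ (-(1 / 2) : ℝ) : ℝ) := by
    rw [logKernel, ofReal_mul, ofReal_cpow (by positivity)]
    push_cast
    rfl
  rw [h, ofReal_im]

theorem logKernel_log_cos_add_pi_div_two_mul_I {θ : ℝ} (hθ : θ ∈ Ioo 0 (π / 2)) :
    logKernel n (Real.log (Real.cos θ) + π / 2 * I) =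
      (Real.cos θ / Real.sin θ : ℝ) * I * (Real.log (Real.cos θ) + π / 2 * I) ^ n := by
  have hcos : 0 < Real.cos θ := Real.cos_pos_of_mem_Ioo ⟨by linarith [hθ.1, Real.pi_pos], hθ.2⟩
  have hsin : 0 < Real.sin θ := Real.sin_pos_of_pos_of_lt_pi hθ.1 (by linarith [hθ.2, Real.pi_pos])
  have hexp : exp (Real.log (Real.cos θ) + π / 2 * I) = Real.cos θ * I := by
    rw [exp_add, exp_pi_div_two_mul_I, ← ofReal_exp, Real.exp_log hcos]
  have hbase : 1 + exp (2 * (Real.log (Real.cos θ) + π / 2 * I)) = (Real.sin θ ^ 2 : ℝ) := by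
    rw [two_mul, exp_add, hexp, Real.sin_sq, ofReal_sub, ofReal_one, ofReal_pow]
    linear_combination (Real.cos θ : ℂ) ^ 2 * I_sq
  have hroot : (Real.sin θ ^ 2) ^ (-(1 / 2) : ℝ) = (Real.sin θ)⁻¹ := by
    rw [← Real.rpow_natCast, ← Real.rpow_mul hsin.le, ← Real.rpow_neg_one]
    norm_num
  rw [logKernel, hexp, hbase, ← ofReal_cpow (by positivity), hroot]
  push_cast
  ring

theorem logKernel_mul_I {y : ℝ} (hy : y ∈ Ioo (-(π / 2)) (π / 2)) :
    logKernel n (y * I) =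
      (y * I) ^ n * exp ((y / 2 : ℝ) * I) * ((√(2 * Real.cos y))⁻¹ : ℝ) := by
  have hcos := Real.cos_pos_of_mem_Ioo hy
  have hne := slitPlane_ne_zero (one_add_exp_two_mul_mul_I_mem_slitPlane hy)
  rw [logKernel, cpow_def_of_ne_zero hne, log_one_add_exp_two_mul_mul_I hy, Real.sqrt_eq_rpow,
    ← Real.rpow_neg (by positivity), Real.rpow_def_of_pos (by positivity), mul_assoc, mul_assoc,
    ofReal_exp, ← exp_add, ← exp_add]
  push_cast
  ring_nf

theorem re_integral_logKernel_sub_eq_integral_im {a b : ℝ} (ha : a < 0) (hb : b < 0) (h : ℝ) :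
    (∫ y in (0:ℝ)..h, logKernel n (b + y * I)).re - (∫ y in (0:ℝ)..h, logKernel n (a + y * I)).re =
      ∫ x in a..b, (logKernel n (x + h * I)).im := by
  have hneg {x : ℝ} (hx : x ∈ [[a, b]]) : x < 0 := hx.2.trans_lt (max_lt ha hb)
  have hint (t : ℝ) : IntervalIntegrable (fun x : ℝ ↦ logKernel n (x + t * I)) volume a b := by
    refine ContinuousOn.intervalIntegrable fun x hx ↦ ?_
    have hK := (differentiableAt_logKernel n (ζ := x + t * I) (by simpa using hneg hx)).continuousAt
    exact (hK.comp (f := fun x : ℝ ↦ (x + t * I : ℂ)) (by fun_prop)).continuousWithinAt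
  have hbottom : (∫ x in a..b, logKernel n x).im = 0 := by
    have him := imCLM.intervalIntegral_comp_comm (hint 0)
    simp only [imCLM_apply, ofReal_zero, zero_mul, add_zero, logKernel_ofReal_im,
      intervalIntegral.integral_zero] at him
    exact him.symm
  have htop := imCLM.intervalIntegral_comp_comm (hint h)
  have hrect := integral_boundary_rect_eq_zero_of_differentiableOn (logKernel n) a (b + h * I)
    fun ζ hζ ↦ (differentiableAt_logKernel n (hneg (by simpa using hζ.1))).differentiableWithinAt
  replace hrect := congrArg im hrect
  simp only [ofReal_im, ofReal_zero, zero_mul, add_zero, ofReal_re, add_re, mul_re, I_re, mul_zero,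
    I_im, mul_one, sub_self, add_im, mul_im, zero_add, smul_eq_mul, sub_im, hbottom, zero_sub,
    one_mul, zero_im] at hrect
  simp only [imCLM_apply] at htop
  linarith

theorem integral_re_log_cos_add_pow_eq_integral_im_logKernel {δ ε : ℝ} (hδ : δ ∈ Ioo 0 (π / 2))
    (hε : ε ∈ Ioo 0 (π / 2)) :
    ∫ θ in δ..ε, (((Real.log (Real.cos θ) : ℂ) + π / 2 * I) ^ n).re =
      ∫ x in Real.log (Real.cos ε)..Real.log (Real.cos δ),
        (logKernel n (x + (π / 2 : ℝ) * I)).im := by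
  have hmem {θ : ℝ} (hθ : θ ∈ [[δ, ε]]) : θ ∈ Ioo 0 (π / 2) :=
    ordConnected_Ioo.uIcc_subset hδ hε hθ
  have hcos {θ : ℝ} (hθ : θ ∈ [[δ, ε]]) : 0 < Real.cos θ :=
    Real.cos_pos_of_mem_Ioo ⟨by linarith [(hmem hθ).1, Real.pi_pos], (hmem hθ).2⟩
  have hsin {θ : ℝ} (hθ : θ ∈ [[δ, ε]]) : 0 < Real.sin θ :=
    Real.sin_pos_of_pos_of_lt_pi (hmem hθ).1 (by linarith [(hmem hθ).2, Real.pi_pos])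
  have hderiv {θ : ℝ} (hθ : θ ∈ [[δ, ε]]) :
      HasDerivAt (fun θ ↦ Real.log (Real.cos θ)) (-Real.sin θ / Real.cos θ) θ :=
    (Real.hasDerivAt_cos θ).log (hcos hθ).ne'
  have hsubst := integral_comp_mul_deriv_of_deriv_nonpos
    (g := fun x ↦ (logKernel n (x + (π / 2 : ℝ) * I)).im)
    (fun θ hθ ↦ (hderiv hθ).continuousAt.continuousWithinAt)
    (fun θ hθ ↦ hderiv (Ioo_subset_Icc_self hθ))
    (fun θ hθ ↦ div_nonpos_of_nonpos_of_nonneg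
      (neg_nonpos.2 (hsin (Ioo_subset_Icc_self hθ)).le) (hcos (Ioo_subset_Icc_self hθ)).le)
  rw [integral_symm (Real.log (Real.cos δ)), ← hsubst, ← intervalIntegral.integral_neg]
  refine integral_congr fun θ hθ ↦ ?_
  have := hcos hθ
  have := hsin hθ
  have hkernel := logKernel_log_cos_add_pi_div_two_mul_I n (hmem hθ)
  simp only [Function.comp, ofReal_div, ofReal_ofNat] at hkernel ⊢
  rw [hkernel, ← ofReal_div, mul_assoc, im_ofReal_mul, I_mul_im]
  field_simp

theorem uIcc_zero_pi_div_two_subset : [[0, π / 2]] ⊆ [[-(π / 2), π / 2]] :=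
  uIcc_subset_uIcc_right (mem_uIcc_of_le (by linarith [Real.pi_pos]) (by linarith [Real.pi_pos]))

theorem intervalIntegrable_const_mul_cos_rpow_neg_half (c : ℝ) :
    IntervalIntegrable (fun y ↦ c * Real.cos y ^ (-(1 / 2) : ℝ)) volume 0 (π / 2) :=
  ((intervalIntegrable_cos_rpow (by norm_num)).mono_set uIcc_zero_pi_div_two_subset).const_mul c

theorem norm_logKernel_add_mul_I_le {x y : ℝ} (hx : x ≤ 0) (hy : y ∈ Ioo 0 (π / 2)) :
    ‖logKernel n (x + y * I)‖ ≤
      2 ^ n * n ! * Real.exp (1 + x / 2) * Real.cos y ^ (-(1 / 2) : ℝ) := by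
  simpa using norm_logKernel_le n (ζ := x + y * I) (by simpa using hx)
    (by simpa using ⟨by linarith [hy.1, Real.pi_pos], hy.2⟩)

theorem tendsto_integral_logKernel_atBot :
    Tendsto (fun x : ℝ ↦ ∫ y in (0:ℝ)..(π / 2), logKernel n (x + y * I)) atBot (𝓝 0) := by
  have hbound : ∀ᶠ x : ℝ in atBot, ‖∫ y in (0:ℝ)..(π / 2), logKernel n (x + y * I)‖ ≤
      2 ^ n * n ! * Real.exp (1 + x / 2) * ∫ y in (0:ℝ)..(π / 2), Real.cos y ^ (-(1 / 2) : ℝ) := by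
    filter_upwards [eventually_le_atBot 0] with x hx
    rw [← intervalIntegral.integral_const_mul]
    refine norm_integral_le_of_norm_le (by positivity) ?_
      (intervalIntegrable_const_mul_cos_rpow_neg_half _)
    have := ae_mem_uIoc_of_forall_mem_Ioo (by positivity)
      fun y hy ↦ norm_logKernel_add_mul_I_le n hx (y := y) hy
    rwa [uIoc_of_le (by positivity)] at this
  have hexp : Tendsto (fun x : ℝ ↦ Real.exp (1 + x / 2)) atBot (𝓝 0) :=
    Real.tendsto_exp_atBot.comp
      (tendsto_atBot_add_const_left _ _ (tendsto_id.atBot_div_const two_pos))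
  refine squeeze_zero_norm' hbound ?_
  simpa using (hexp.const_mul (2 ^ n * n ! : ℝ)).mul_const
    (∫ y in (0:ℝ)..(π / 2), Real.cos y ^ (-(1 / 2) : ℝ))

theorem tendsto_integral_logKernel_nhdsLT :
    Tendsto (fun x : ℝ ↦ ∫ y in (0:ℝ)..(π / 2), logKernel n (x + y * I)) (𝓝[<] 0)
      (𝓝 (∫ y in (0:ℝ)..(π / 2), logKernel n (y * I))) := by
  refine tendsto_integral_vertical_nhdsLT (by positivity)
    (fun x hx ↦ continuous_logKernel_vertical n hx)
    (fun y hy ↦ continuousAt_logKernel_mul_I n ⟨by linarith [hy.1, Real.pi_pos], hy.2⟩)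
    (fun x hx y hy ↦ (norm_logKernel_add_mul_I_le n hx.le hy).trans ?_)
    (intervalIntegrable_const_mul_cos_rpow_neg_half (2 ^ n * n ! * Real.exp 1))
  have := Real.cos_pos_of_mem_Ioo ⟨by linarith [hy.1, Real.pi_pos], hy.2⟩
  gcongr
  linarith

theorem log_cos_neg {θ : ℝ} (hθ : θ ∈ Ioo 0 (π / 2)) : Real.log (Real.cos θ) < 0 := by
  have hcos := Real.cos_pos_of_mem_Ioo ⟨by linarith [hθ.1, Real.pi_pos], hθ.2⟩
  have hcos_lt := Real.cos_lt_cos_of_nonneg_of_le_pi_div_two le_rfl hθ.2.le hθ.1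
  exact Real.log_neg hcos (by simpa using hcos_lt)

theorem tendsto_log_cos_nhdsGT_zero :
    Tendsto (fun θ ↦ Real.log (Real.cos θ)) (𝓝[>] 0) (𝓝[<] 0) := by
  refine tendsto_nhdsWithin_iff.2 ⟨?_, ?_⟩
  · have : ContinuousAt (fun θ ↦ Real.log (Real.cos θ)) 0 :=
      Real.continuous_cos.continuousAt.log (by simp)
    simpa using this.tendsto.mono_left nhdsWithin_le_nhds
  · filter_upwards [Ioo_mem_nhdsGT Real.pi_div_two_pos] with θ hθ using log_cos_neg hθ

theorem tendsto_log_cos_nhdsLT_pi_div_two :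
    Tendsto (fun θ ↦ Real.log (Real.cos θ)) (𝓝[<] (π / 2)) atBot :=
  Real.tendsto_log_nhdsGT_zero.comp Real.tendsto_cos_pi_div_two

theorem re_integral_logKernel_mul_I :
    (∫ y in (0:ℝ)..(π / 2), logKernel n (y * I)).re =
      ∫ θ in (0:ℝ)..(π / 2), (((Real.log (Real.cos θ) : ℂ) + π / 2 * I) ^ n).re := by
  have hint := (intervalIntegrable_log_cos_add_pow (π / 2 * I) n).mono_set
    uIcc_zero_pi_div_two_subset
  have hre := continuous_re.tendsto
  have h := sub_eq_integral_of_tendsto Real.pi_div_two_pos ⟨hint.1.re, hint.2.re⟩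
    (fun δ hδ ε hε ↦ (re_integral_logKernel_sub_eq_integral_im n (log_cos_neg hε)
      (log_cos_neg hδ) (π / 2)).trans
        (integral_re_log_cos_add_pow_eq_integral_im_logKernel n hδ hε).symm)
    ((hre _).comp ((tendsto_integral_logKernel_nhdsLT n).comp tendsto_log_cos_nhdsGT_zero))
    ((hre _).comp ((tendsto_integral_logKernel_atBot n).comp tendsto_log_cos_nhdsLT_pi_div_two))
  simpa using h

theorem re_logKernel_three_mul_I {y : ℝ} (hy : y ∈ Ioo (-(π / 2)) (π / 2)) :
    (logKernel 3 (y * I)).re = y ^ 3 * (Real.sin (y / 2) / √(2 * Real.cos y)) := by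
  have hcube : (y * I) ^ 3 = ((-y ^ 3 : ℝ) : ℂ) * I := by
    push_cast
    linear_combination (y : ℂ) ^ 3 * I_pow_three
  rw [logKernel_mul_I 3 hy, hcube, re_mul_ofReal, mul_assoc, re_ofReal_mul, I_mul_re,
    exp_ofReal_mul_I_im]
  ring

theorem integral_cube_mul_sin_half_div_sqrt_two_mul_cos :
    ∫ θ in (0:ℝ)..(π / 2), θ ^ 3 * (Real.sin (θ / 2) / √(2 * Real.cos θ)) =
      ∫ θ in (0:ℝ)..(π / 2), (((Real.log (Real.cos θ) : ℂ) + π / 2 * I) ^ 3).re := by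
  have hint : IntervalIntegrable (fun y : ℝ ↦ logKernel 3 (y * I)) volume 0 (π / 2) := by
    refine intervalIntegrable_of_norm_le_Ioo (by positivity)
      (intervalIntegrable_const_mul_cos_rpow_neg_half (2 ^ 3 * 3 ! * Real.exp (1 + 0 / 2))) ?_
      fun y hy ↦ by simpa using norm_logKernel_add_mul_I_le 3 le_rfl hy
    unfold logKernel
    exact Measurable.aestronglyMeasurable (by fun_prop)
  rw [← re_integral_logKernel_mul_I, ← reCLM_apply, ← reCLM.intervalIntegral_comp_comm hint]
  refine integral_congr_uIoo fun θ hθ ↦ ?_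
  rw [uIoo_of_le (by positivity)] at hθ
  exact (re_logKernel_three_mul_I ⟨by linarith [hθ.1, Real.pi_pos], hθ.2⟩).symm

end Contour

/- STATEMENT 13: `Ω_{2,1,1,1} = (iπ³/12) log 2 - (iπ/6)(log 2)³ - (iπ/4) ζ(3)`. -/
theorem stmt_13 :
    Omega [F₂, F₁, F₁, F₁] 1 =
      Complex.I * (Real.pi : ℂ) ^ 3 / 12 * ((Real.log 2 : ℝ) : ℂ) -
        Complex.I * (Real.pi : ℂ) / 6 * ((Real.log 2 : ℝ) : ℂ) ^ 3 -
        Complex.I * (Real.pi : ℂ) / 4 * riemannZeta 3 := by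
  set J : ℝ := ∫ θ in (0:ℝ)..(π / 2), θ ^ 3 * (Real.sin (θ / 2) / √(2 * Real.cos θ)) with hJ
  have hΩ : Omega [F₂, F₁, F₁, F₁] 1 = -2 * I ^ 3 / 3 ! * J := Omega_F₂_cons_replicate_F₁ 3
  have hcontour : 2 * J =
      ∫ θ in -(π / 2)..(π / 2), (((Real.log (Real.cos θ) : ℂ) + (π / 2 : ℝ) * I) ^ 3).re := by
    rw [hJ, integral_cube_mul_sin_half_div_sqrt_two_mul_cos,
      ← two_mul_integral_re_log_cos_add_mul_I_pow]
    push_cast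
    rfl
  have hvalue := integral_re_log_cos_add_mul_I_cube (π / 2)
  rw [← hcontour] at hvalue
  push_cast at hvalue
  rw [hΩ, I_pow_three, show 3 ! = 6 from rfl]
  push_cast
  linear_combination I / 6 * hvalue
end
end
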